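/- arXiv:1811.10967 — 2 statements merged into one kernel-verified Lean document; each statement's English description precedes it below -/
import Mathlib

section
/- The proportion of partitions comparable to a self-conjugate partition tends to zero: for every ε > 0 there exists N such that for all n ≥ N and every self-conjugate partition λ of n, |C(λ)| ≤ ε · p(n). In particular, |C(ρ_m)| / p(m(m+1)/2) → 0 as m → ∞, i.e., the probability that a uniformly random partition of m(m+1)/2 is comparable in dominance order to the staircase partition ρ_m tends to zero. -/
/-- `f` represents a partition of `n`: a weakly decreasing sequence (0-indexed,
padded with zeros) whose parts sum to `n`. Any partition of `n` has at most `n`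
nonzero parts, so we may demand `f i = 0` for `i ≥ n`. -/
def IsPartitionOf (n : ℕ) (f : ℕ → ℕ) : Prop :=
  (∀ i j, i ≤ j → f j ≤ f i) ∧ (∀ i, n ≤ i → f i = 0) ∧ ∑ i ∈ Finset.range n, f i = n

/-- `DominatedBy f g` means `f ⊴ g` in dominance order: every partial sum of `f`
is at most the corresponding partial sum of `g`. -/
def DominatedBy (f g : ℕ → ℕ) : Prop :=
  ∀ k, ∑ i ∈ Finset.range k, f i ≤ ∑ i ∈ Finset.range k, g i

/-- The conjugate (transpose) partition: its `i`-th part (0-indexed) is the number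
of parts of `f` that are `> i`. -/
noncomputable def conjugate (f : ℕ → ℕ) : ℕ → ℕ := fun i => Set.ncard {j | i < f j}

/-- The staircase partition `ρ_m = (m, m-1, …, 2, 1)` (0-indexed). -/
def staircase (m : ℕ) : ℕ → ℕ := fun i => m - i

/-!
If `μ` is comparable to a self-conjugate partition, then `μ` is comparable to its own conjugate, so
it suffices that a random partition is rarely comparable to its conjugate. In Frobenius coordinates
(arms coloured `true`, legs coloured `false`), comparability makes the sum of excesses over every
threshold `a` at most as large for one colour as for the other one (`ExcessDominated`).

Given the union and the intersection of the two coordinate sets, the colouring of their symmetric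
difference `D` is uniform among all balanced ones. Suppose that `D` has `L` widely separated scales
(`HasScales`). At each scale the new elements of `D` contribute a random signed sum which, by
comparison of second and fourth moments, exceeds everything contributed by the larger elements with
probability at least `1 / 24`. Hence all signed sums of excesses are nonpositive for at most a
proportion `(23 / 24) ^ L` of the sign patterns, and restricting to balanced patterns costs only a
factor `2`.

That `L` scales typically exist is shown with weight-preserving moves between gaps of the
coordinate sequences. A move that injectively produces `K` images of each member of an event
bounds the frequency of the event by `1 / K`. In this way coincidences between the two colours among
the largest coordinates are rare, and so is a gap which, weighted by its index, is much smaller than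
another one. Since the harmonic series diverges, the span of the `J` largest coordinates eventually
doubles that of the `j` largest ones, which yields arbitrarily many scales. Boundedness of the gaps
or of the Durfee size is rare because `p(n) / p(n + k) → 1`.
-/

open Finset

/-! ### Partitions, conjugation and dominance -/

theorem IsPartitionOf.antitone {n : ℕ} {f : ℕ → ℕ} (hf : IsPartitionOf n f) : Antitone f :=
  fun i j => hf.1 i j

theorem IsPartitionOf.eq_zero {n i : ℕ} {f : ℕ → ℕ} (hf : IsPartitionOf n f) (hi : n ≤ i) :
    f i = 0 :=
  hf.2.1 i hi

theorem IsPartitionOf.sum_range {n N : ℕ} {f : ℕ → ℕ} (hf : IsPartitionOf n f) (hN : n ≤ N) :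
    ∑ i ∈ range N, f i = n :=
  (eventually_constant_sum (fun _ => hf.eq_zero) hN).trans hf.2.2

theorem IsPartitionOf.apply_le {n : ℕ} {f : ℕ → ℕ} (hf : IsPartitionOf n f) (i : ℕ) : f i ≤ n := by
  rcases lt_or_ge i n with hi | hi
  · calc f i ≤ ∑ j ∈ range n, f j := single_le_sum (fun _ _ => Nat.zero_le _) (mem_range.2 hi)
      _ = n := hf.2.2
  · simp only [hf.eq_zero hi, Nat.zero_le]

theorem isPartitionOf_of_sum {f : ℕ → ℕ} {N n : ℕ} (hf : Antitone f) (hN : ∀ i, N ≤ i → f i = 0)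
    (hsum : ∑ i ∈ range N, f i = n) : IsPartitionOf n f := by
  have hn : ∀ i, n ≤ i → f i = 0 := by
    intro i hi
    by_contra hne
    have hiN : i < N := by
      by_contra hh
      exact hne (hN i (not_lt.1 hh))
    have hcard : i + 1 ≤ ∑ k ∈ range (i + 1), f k := by
      have hpos : ∀ k ∈ range (i + 1), 1 ≤ f k := fun k hk =>
        (Nat.one_le_iff_ne_zero.2 hne).trans (hf (Nat.lt_succ_iff.1 (mem_range.1 hk)))
      simpa only [card_range, smul_eq_mul, mul_one] using card_nsmul_le_sum _ _ _ hpos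
    have hle : ∑ k ∈ range (i + 1), f k ≤ n := hsum ▸ sum_le_sum_of_subset (range_mono hiN)
    omega
  refine ⟨fun _ _ h => hf h, hn, ?_⟩
  rw [← eventually_constant_sum hn (le_max_left n N),
    eventually_constant_sum hN (le_max_right n N), hsum]

theorem finite_setOf_isPartitionOf (n : ℕ) : {f : ℕ → ℕ | IsPartitionOf n f}.Finite := by
  refine Set.Finite.of_injOn (f := fun f (i : Fin n) => f i)
    (t := {g : Fin n → ℕ | ∀ i, g i ∈ Set.Iic n}) (fun f hf i => hf.apply_le i) ?_
    (Set.Finite.pi' fun _ => Set.finite_Iic n)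
  intro f hf g hg hfg
  funext i
  rcases lt_or_ge i n with hi | hi
  · exact congrFun hfg ⟨i, hi⟩
  · rw [hf.eq_zero hi, hg.eq_zero hi]

/-- The finite set of all partitions of `n`, denoted `P(n)` in the literature. -/
noncomputable def partitions (n : ℕ) : Finset (ℕ → ℕ) :=
  (finite_setOf_isPartitionOf n).toFinset

theorem mem_partitions {n : ℕ} {f : ℕ → ℕ} : f ∈ partitions n ↔ IsPartitionOf n f :=
  Set.Finite.mem_toFinset _

theorem conjugate_eq_of_lt_iff {f g : ℕ → ℕ} (h : ∀ i j, j < g i ↔ i < f j) :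
    conjugate f = g := by
  funext i
  have hIio : {j | i < f j} = Set.Iio (g i) := by
    ext j
    exact (h i j).symm
  rw [conjugate, hIio, ← coe_Iio, Set.ncard_coe_finset, Nat.card_Iio]

theorem lt_conjugate_iff {n : ℕ} {f : ℕ → ℕ} (hf : IsPartitionOf n f) (i j : ℕ) :
    j < conjugate f i ↔ i < f j := by
  have hex : ∀ i, ∃ j, f j ≤ i := fun i => ⟨n, by simp only [hf.eq_zero le_rfl, Nat.zero_le]⟩
  have hfind : ∀ i j, j < Nat.find (hex i) ↔ i < f j := by
    intro i j
    rw [Nat.lt_find_iff]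
    exact ⟨fun h => not_le.1 (h j le_rfl), fun h m hm => not_le.2 (h.trans_le (hf.antitone hm))⟩
  rw [conjugate_eq_of_lt_iff hfind, hfind]

theorem conjugate_eq_card {n : ℕ} {f : ℕ → ℕ} (hf : IsPartitionOf n f) (i : ℕ) :
    conjugate f i = #{j ∈ range n | i < f j} := by
  rw [← card_range (conjugate f i)]
  congr 1
  ext j
  rw [mem_filter, mem_range, mem_range, lt_conjugate_iff hf]
  refine ⟨fun hj => ⟨?_, hj⟩, And.right⟩
  by_contra hjn
  rw [hf.eq_zero (not_lt.1 hjn)] at hj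
  exact Nat.not_lt_zero _ hj

theorem card_filter_range_lt (k a : ℕ) : #{i ∈ range k | i < a} = min a k := by
  rw [← card_range (min a k)]
  congr 1
  ext i
  simp only [mem_filter, mem_range]
  omega

theorem sum_range_conjugate {n : ℕ} {f : ℕ → ℕ} (hf : IsPartitionOf n f) (k : ℕ) :
    ∑ i ∈ range k, conjugate f i = ∑ j ∈ range n, min (f j) k := by
  simp_rw [conjugate_eq_card hf, card_filter]
  rw [sum_comm]
  simp_rw [← card_filter, card_filter_range_lt]

theorem sum_max_sub_le_of_antitoneOn {α : Type*} [AddCommGroup α] [LinearOrder α]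
    [IsOrderedAddMonoid α] {d : ℕ} {F G : ℕ → α} (hF : AntitoneOn F (Set.Iio d))
    (h : ∀ k ≤ d, ∑ i ∈ range k, F i ≤ ∑ i ∈ range k, G i) (t : α) :
    ∑ i ∈ range d, max (F i - t) 0 ≤ ∑ i ∈ range d, max (G i - t) 0 := by
  induction d with
  | zero => rfl
  | succ d ih =>
    rcases le_or_gt (F d) t with hd | hd
    · have hrec := ih (hF.mono (Set.Iio_subset_Iio d.le_succ)) fun k hk => h k (hk.trans d.le_succ)
      rw [sum_range_succ, sum_range_succ]
      have hFd : max (F d - t) 0 = 0 := max_eq_right (sub_nonpos.2 hd)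
      have hGd : 0 ≤ max (G d - t) 0 := le_max_right _ _
      rw [hFd, add_zero]
      exact hrec.trans (le_add_of_nonneg_right hGd)
    · have hF_pos : ∀ i ∈ range (d + 1), max (F i - t) 0 = F i - t := by
        intro i hi
        rw [mem_range] at hi
        have hdi := hF (Set.mem_Iio.2 hi) (Set.mem_Iio.2 d.lt_succ_self) (Nat.lt_succ_iff.1 hi)
        exact max_eq_left (sub_nonneg.2 (hd.le.trans hdi))
      calc ∑ i ∈ range (d + 1), max (F i - t) 0 = ∑ i ∈ range (d + 1), (F i - t) :=
            sum_congr rfl hF_pos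
        _ ≤ ∑ i ∈ range (d + 1), (G i - t) := by
            rw [sum_sub_distrib, sum_sub_distrib]
            exact sub_le_sub_right (h _ le_rfl) _
        _ ≤ ∑ i ∈ range (d + 1), max (G i - t) 0 := sum_le_sum fun i _ => le_max_left _ _

theorem DominatedBy.conjugate {n : ℕ} {f g : ℕ → ℕ} (hf : IsPartitionOf n f)
    (hg : IsPartitionOf n g) (h : DominatedBy f g) :
    DominatedBy (conjugate g) (conjugate f) := by
  intro k
  rw [sum_range_conjugate hf, sum_range_conjugate hg]
  have hexcess := sum_max_sub_le_of_antitoneOn (d := n) (F := fun i => (f i : ℤ))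
    (G := fun i => (g i : ℤ)) (fun i _ j _ hij => Nat.cast_le.2 (hf.antitone hij))
    (fun k _ => by exact_mod_cast h k) k
  have hmin : ∀ u : ℕ → ℕ, IsPartitionOf n u →
      ((∑ j ∈ range n, min (u j) k : ℕ) : ℤ) = n - ∑ i ∈ range n, max ((u i : ℤ) - k) 0 := by
    intro u hu
    have hsum : ((∑ i ∈ range n, u i : ℕ) : ℤ) = n := congrArg _ hu.2.2
    rw [← hsum, Nat.cast_sum, Nat.cast_sum, ← sum_sub_distrib]
    exact sum_congr rfl fun i _ => by omega
  have hf_min := hmin f hf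
  have hg_min := hmin g hg
  omega

theorem dominatedBy_conjugate_or_of_comparable {n : ℕ} {l μ : ℕ → ℕ} (hl : IsPartitionOf n l)
    (hconj : conjugate l = l) (hμ : IsPartitionOf n μ) (h : DominatedBy μ l ∨ DominatedBy l μ) :
    DominatedBy μ (conjugate μ) ∨ DominatedBy (conjugate μ) μ := by
  rcases h with h | h
  · have hle := h.conjugate hμ hl
    rw [hconj] at hle
    exact Or.inl fun k => (h k).trans (hle k)
  · have hle := h.conjugate hl hμ
    rw [hconj] at hle
    exact Or.inr fun k => (hle k).trans (h k)

/-! ### Asymptotic frequencies -/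

section AsympFreq

variable {α β ι : Type*} {S : ℕ → Finset α} {P Q : α → Prop} {a b : ℝ}

open Classical in
/-- The limit superior of the frequency of the event `P` in the finite sample spaces `S n` is at
most `a`. Avoiding quotients makes the definition meaningful for empty `S n`. -/
def AsympFreqLE (S : ℕ → Finset α) (P : α → Prop) (a : ℝ) : Prop :=
  ∀ η : ℝ, 0 < η → ∀ᶠ n : ℕ in Filter.atTop, (#{s ∈ S n | P s} : ℝ) ≤ (a + η) * #(S n)

theorem asympFreqLE_iff [DecidablePred P] :
    AsympFreqLE S P a ↔
      ∀ η : ℝ, 0 < η → ∀ᶠ n : ℕ in Filter.atTop, (#{s ∈ S n | P s} : ℝ) ≤ (a + η) * #(S n) := by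
  unfold AsympFreqLE
  congr! 8

namespace AsympFreqLE

theorem false (S : ℕ → Finset α) : AsympFreqLE S (fun _ => False) 0 := by
  rw [asympFreqLE_iff]
  refine fun η hη => Filter.Eventually.of_forall fun n => ?_
  rw [filter_false, card_empty, Nat.cast_zero]
  positivity

theorem of_forall_add (h : ∀ η : ℝ, 0 < η → AsympFreqLE S P (a + η)) : AsympFreqLE S P a := by
  intro η hη
  filter_upwards [h (η / 2) (half_pos hη) (η / 2) (half_pos hη)] with n hn
  rwa [add_assoc, add_halves] at hn

theorem of_injOn {T : ℕ → Finset β} {Q : β → Prop} (h : AsympFreqLE S P a) (Φ : ℕ → β → α)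
    (hcard : ∀ n, #(S n) = #(T n)) (hΦ : ∀ n, ∀ t ∈ T n, Q t → Φ n t ∈ S n ∧ P (Φ n t))
    (hinj : ∀ n, Set.InjOn (Φ n) (T n)) : AsympFreqLE T Q a := by
  classical
  intro η hη
  filter_upwards [h η hη] with n hn
  rw [← hcard]
  refine le_trans ?_ hn
  refine Nat.cast_le.2 (card_le_card_of_injOn (Φ n) (fun t ht => ?_)
    ((hinj n).mono fun t ht => (mem_filter.1 ht).1))
  rw [mem_coe, mem_filter] at ht ⊢
  exact hΦ n t ht.1 ht.2

theorem mono (h : AsympFreqLE S P a) (hQ : ∀ n, ∀ s ∈ S n, Q s → P s) : AsympFreqLE S Q a :=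
  h.of_injOn (fun _ => id) (fun _ => rfl) (fun n s hs hq => ⟨hs, hQ n s hs hq⟩)
    fun _ => Set.injOn_id _

theorem mono_right (h : AsympFreqLE S P a) (hab : a ≤ b) : AsympFreqLE S P b := by
  intro η hη
  filter_upwards [h η hη] with n hn
  exact hn.trans (by gcongr)

theorem or (hP : AsympFreqLE S P a) (hQ : AsympFreqLE S Q b) :
    AsympFreqLE S (fun s => P s ∨ Q s) (a + b) := by
  classical
  rw [asympFreqLE_iff] at *
  intro η hη
  filter_upwards [hP (η / 2) (half_pos hη), hQ (η / 2) (half_pos hη)] with n hPn hQn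
  have hunion : (#{s ∈ S n | P s ∨ Q s} : ℝ) ≤ #{s ∈ S n | P s} + #{s ∈ S n | Q s} := by
    rw [filter_or]
    exact_mod_cast card_union_le _ _
  linarith

theorem of_not_and (hQ : AsympFreqLE S Q 0) (h : AsympFreqLE S (fun s => ¬ Q s ∧ P s) a) :
    AsympFreqLE S P a := by
  refine ((hQ.or h).mono fun n s _ hPs => ?_).mono_right (zero_add a).le
  by_cases hQs : Q s
  · exact Or.inl hQs
  · exact Or.inr ⟨hQs, hPs⟩

theorem exists_mem (I : Finset ι) {P : ι → α → Prop} {a : ι → ℝ}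
    (h : ∀ i ∈ I, AsympFreqLE S (P i) (a i)) :
    AsympFreqLE S (fun s => ∃ i ∈ I, P i s) (∑ i ∈ I, a i) := by
  classical
  induction I using Finset.induction_on with
  | empty => simpa only [notMem_empty, false_and, exists_false, sum_empty] using AsympFreqLE.false S
  | insert i I hi ih =>
    rw [sum_insert hi]
    refine ((h i (mem_insert_self _ _)).or (ih fun j hj => h j (mem_insert_of_mem hj))).mono ?_
    rintro n s - ⟨j, hj, hp⟩
    rcases mem_insert.1 hj with rfl | hj
    · exact Or.inl hp
    · exact Or.inr ⟨j, hj, hp⟩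

theorem of_moves {K : ℕ} (hK : 0 < K) (R : α → β → Prop) (Φ : α → β → α)
    (hP : ∀ n, ∀ s ∈ S n, P s → ∃ B : Finset β, K ≤ #B ∧ ∀ b ∈ B, R s b)
    (hΦ : ∀ n, ∀ s ∈ S n, ∀ b, R s b → Φ s b ∈ S n)
    (hinj : ∀ n, ∀ s ∈ S n, ∀ s' ∈ S n, ∀ b b', R s b → R s' b' → Φ s b = Φ s' b' →
      s = s' ∧ b = b') :
    AsympFreqLE S P (1 / K) := by
  classical
  intro η hη
  refine Filter.Eventually.of_forall fun n => ?_
  choose! B hKB hBR using hP n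
  have hmoves : #({s ∈ S n | P s}.sigma B) ≤ #(S n) := by
    apply card_le_card_of_injOn fun z => Φ z.1 z.2
    · rintro ⟨s, b⟩ hz
      simp only [mem_coe, mem_sigma, mem_filter] at hz ⊢
      exact hΦ n s hz.1.1 b (hBR s hz.1.1 hz.1.2 b hz.2)
    · rintro ⟨s, b⟩ hz ⟨s', b'⟩ hz' heq
      simp only [mem_coe, mem_sigma, mem_filter] at hz hz'
      obtain ⟨rfl, rfl⟩ := hinj n s hz.1.1 s' hz'.1.1 b b' (hBR s hz.1.1 hz.1.2 b hz.2)
        (hBR s' hz'.1.1 hz'.1.2 b' hz'.2) heq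
      rfl
  have hcount : #{s ∈ S n | P s} * K ≤ #(S n) := by
    refine le_trans ?_ hmoves
    rw [card_sigma]
    exact card_nsmul_le_sum _ _ _ fun s hs =>
      hKB s (mem_filter.1 hs).1 (mem_filter.1 hs).2
  have hcount' : (#{s ∈ S n | P s} : ℝ) * K ≤ #(S n) := by exact_mod_cast hcount
  have hK' : (0 : ℝ) < K := Nat.cast_pos.2 hK
  calc (#{s ∈ S n | P s} : ℝ) ≤ #(S n) / K := by rwa [le_div_iff₀ hK']
    _ = 1 / K * #(S n) := by ring
    _ ≤ (1 / K + η) * #(S n) := by gcongr; linarith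

theorem of_compl_injOn {k : ℕ}
    (hS : ∀ η : ℝ, 0 < η → ∀ᶠ n in Filter.atTop, (1 - η) * (#(S (n + k)) : ℝ) ≤ #(S n))
    (hQ : AsympFreqLE S Q 0) (Φ : α → α)
    (hΦ : ∀ n, ∀ s ∈ S n, ¬ Q s → Φ s ∈ S (n + k) ∧ ¬ P (Φ s))
    (hinj : ∀ n, Set.InjOn Φ {s | s ∈ S n ∧ ¬ Q s}) : AsympFreqLE S P 0 := by
  classical
  intro η hη
  set δ := min (η / 2) 1 with hδ
  have hδ0 : 0 < δ := lt_min (half_pos hη) one_pos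
  suffices h : ∀ᶠ n in Filter.atTop,
      (#{s ∈ S (n + k) | P s} : ℝ) ≤ (0 + η) * #(S (n + k)) by
    rwa [← Filter.map_add_atTop_eq_nat k, Filter.eventually_map]
  filter_upwards [hS δ hδ0, hQ δ hδ0] with n hSn hQn
  have himage : #{s ∈ S n | ¬ Q s} ≤ #{s ∈ S (n + k) | ¬ P s} := by
    refine card_le_card_of_injOn Φ ?_ ((hinj n).mono fun s hs => mem_filter.1 hs)
    intro s hs
    rw [mem_coe, mem_filter] at hs ⊢
    exact hΦ n s hs.1 hs.2
  have hsplitP : #{s ∈ S (n + k) | P s} + #{s ∈ S (n + k) | ¬ P s} = #(S (n + k)) :=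
    card_filter_add_card_filter_not _
  have hsplitQ : #{s ∈ S n | Q s} + #{s ∈ S n | ¬ Q s} = #(S n) :=
    card_filter_add_card_filter_not _
  have hcount : (#(S n) : ℝ) + #{s ∈ S (n + k) | P s} ≤ #(S (n + k)) + #{s ∈ S n | Q s} := by
    exact_mod_cast (by omega :
      #(S n) + #{s ∈ S (n + k) | P s} ≤ #(S (n + k)) + #{s ∈ S n | Q s})
  have hδη : δ ≤ η / 2 := min_le_left _ _
  have hδ1 : δ ≤ 1 := min_le_right _ _
  have hnonneg : (0 : ℝ) ≤ #(S (n + k)) := Nat.cast_nonneg _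
  calc (#{s ∈ S (n + k) | P s} : ℝ) ≤ #(S (n + k)) - (1 - δ) * #(S n) := by linarith
    _ ≤ #(S (n + k)) - (1 - δ) * ((1 - δ) * #(S (n + k))) := by
        have : 0 ≤ 1 - δ := sub_nonneg.2 hδ1
        gcongr
    _ ≤ 2 * δ * #(S (n + k)) := by nlinarith [mul_nonneg (sq_nonneg δ) hnonneg]
    _ ≤ (0 + η) * #(S (n + k)) := by gcongr; linarith

theorem of_sum_weight_le {P : α → Prop} {Q : ι → α → Prop} {I : Finset ι} {w : ι → ℝ} {C : ℝ}
    (hC : 0 < C) (hw : ∀ i ∈ I, 0 ≤ w i) (hW : 0 < ∑ i ∈ I, w i)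
    (hQ : ∀ i ∈ I, AsympFreqLE S (Q i) a)
    (hP : ∀ n, ∀ s ∈ S n, P s → ∃ I' ⊆ I, (∀ i ∈ I', Q i s) ∧
      ∑ i ∈ I, w i ≤ C * ∑ i ∈ I', w i) :
    AsympFreqLE S P (C * a) := by
  classical
  intro η hη
  filter_upwards [(Finset.eventually_all I).2 fun i hi => hQ i hi (η / C) (by positivity)]
    with n hn
  have hweight : ∀ s, 0 ≤ ∑ i ∈ I with Q i s, w i := fun s =>
    sum_nonneg fun i hi => hw i (mem_filter.1 hi).1
  refine le_of_mul_le_mul_right ?_ hW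
  calc (#{s ∈ S n | P s} : ℝ) * ∑ i ∈ I, w i
      = ∑ s ∈ S n with P s, ∑ i ∈ I, w i := by rw [sum_const, nsmul_eq_mul]
    _ ≤ ∑ s ∈ S n with P s, C * ∑ i ∈ I with Q i s, w i := by
        refine sum_le_sum fun s hs => ?_
        obtain ⟨hs, hPs⟩ := mem_filter.1 hs
        obtain ⟨I', hI', hQI', hle⟩ := hP n s hs hPs
        refine hle.trans (mul_le_mul_of_nonneg_left ?_ hC.le)
        exact sum_le_sum_of_subset_of_nonneg
          (fun i hi => mem_filter.2 ⟨hI' hi, hQI' i hi⟩) fun i hi _ => hw i (mem_filter.1 hi).1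
    _ ≤ ∑ s ∈ S n, C * ∑ i ∈ I with Q i s, w i :=
        sum_le_sum_of_subset_of_nonneg (filter_subset _ _)
          fun s _ _ => mul_nonneg hC.le (hweight s)
    _ = C * ∑ i ∈ I, #{s ∈ S n | Q i s} * w i := by
        simp_rw [← mul_sum, sum_filter]
        rw [sum_comm]
        simp_rw [← sum_filter, sum_const, nsmul_eq_mul]
    _ ≤ C * ∑ i ∈ I, (a + η / C) * #(S n) * w i := by
        gcongr with i hi
        · exact hw i hi
        · exact hn i hi
    _ = (C * a + η) * #(S n) * ∑ i ∈ I, w i := by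
        rw [← mul_sum]
        field_simp

end AsympFreqLE

end AsympFreq

/-! ### The ratio of consecutive partition numbers -/

theorem sum_range_ite_lt {M : Type*} [NonAssocSemiring M] {r N : ℕ} (hr : r ≤ N) (t : M) :
    ∑ i ∈ range N, (if i < r then t else 0) = r * t := by
  rw [← sum_filter, sum_const, card_filter_range_lt, min_eq_left hr, nsmul_eq_mul]

theorem IsPartitionOf.add_rows {n : ℕ} {f : ℕ → ℕ} (hf : IsPartitionOf n f) (r t : ℕ) :
    IsPartitionOf (n + r * t) fun i => f i + if i < r then t else 0 := by
  apply isPartitionOf_of_sum (N := n + r)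
  · intro i j hij
    have := hf.antitone hij
    dsimp only
    split_ifs <;> omega
  · intro i hi
    rw [hf.eq_zero (by omega), if_neg (by omega)]
  · rw [sum_add_distrib, hf.sum_range (Nat.le_add_right _ _),
      sum_range_ite_lt (Nat.le_add_left _ _), Nat.cast_id]

theorem add_rows_injective (r t : ℕ) :
    Function.Injective fun (f : ℕ → ℕ) i => f i + if i < r then t else 0 :=
  fun _ _ h => funext fun i => Nat.add_right_cancel (congrFun h i)

theorem card_partitions_mono : Monotone fun n => #(partitions n) := by
  intro m n h
  obtain ⟨k, rfl⟩ := Nat.exists_eq_add_of_le h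
  refine card_le_card_of_injOn _ (fun f hf => ?_) (add_rows_injective 1 k).injOn
  rw [mem_coe, mem_partitions] at hf ⊢
  simpa only [one_mul] using hf.add_rows 1 k

theorem card_partitions_pos (n : ℕ) : 0 < #(partitions n) := by
  refine lt_of_lt_of_le (card_pos.2 ⟨fun _ => 0, ?_⟩) (card_partitions_mono (Nat.zero_le n))
  exact mem_partitions.2 (isPartitionOf_of_sum (N := 0) antitone_const (fun _ _ => rfl) rfl)

theorem IsPartitionOf.remove_box {n : ℕ} {f : ℕ → ℕ} (hf : IsPartitionOf (n + 1) f)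
    (hne : f 0 ≠ f 1) : IsPartitionOf n fun i => f i - if i = 0 then 1 else 0 := by
  have h10 := hf.antitone (zero_le_one' ℕ)
  apply isPartitionOf_of_sum (N := n + 1)
  · refine antitone_nat_of_succ_le fun i => ?_
    have hi := hf.antitone i.le_succ
    rcases Nat.eq_zero_or_pos i with rfl | hi0
    · rw [zero_add, if_pos rfl, if_neg one_ne_zero]
      omega
    · rwa [if_neg hi0.ne', if_neg i.succ_ne_zero]
  · intro i hi
    rw [hf.eq_zero hi, Nat.zero_sub]
  · have hsum := hf.sum_range le_rfl
    rw [sum_range_succ'] at hsum ⊢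
    simp only [Nat.succ_ne_zero, ite_false, ite_true, Nat.sub_zero]
    omega

theorem card_partitions_succ_le (n : ℕ) :
    #(partitions (n + 1)) ≤ #(partitions n) + #{f ∈ partitions (n + 1) | f 0 = f 1} := by
  rw [← card_filter_add_card_filter_not (s := partitions (n + 1)) fun f => f 0 = f 1, add_comm]
  refine Nat.add_le_add_right ?_ _
  apply card_le_card_of_injOn fun f i => f i - if i = 0 then 1 else 0
  · intro f hf
    simp only [mem_coe, mem_filter, mem_partitions] at hf ⊢
    exact hf.1.remove_box hf.2
  · intro f hf g hg h
    simp only [mem_coe, mem_filter, mem_partitions] at hf hg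
    have hf10 := hf.1.antitone (zero_le_one' ℕ)
    have hg10 := hg.1.antitone (zero_le_one' ℕ)
    funext i
    have hi := congrFun h i
    rcases eq_or_ne i 0 with rfl | hi0
    · simp only [if_true] at hi
      omega
    · simpa only [if_neg hi0, Nat.sub_zero] using hi

/-- Detach the last column of the block of the first `c + 1` rows and append it, as a row, to the
first row. -/
def cornerMove (f : ℕ → ℕ) (c : ℕ) : ℕ → ℕ :=
  fun i => f i + (if i = 0 then c + 1 else 0) - if i < c + 1 then 1 else 0

theorem isPartitionOf_cornerMove {n c : ℕ} {f : ℕ → ℕ} (hf : IsPartitionOf n f)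
    (hc : f (c + 1) < f c) : IsPartitionOf n (cornerMove f c) := by
  have hcn : c < n := by
    by_contra hcn
    rw [hf.eq_zero (not_lt.1 hcn)] at hc
    exact Nat.not_lt_zero _ hc
  apply isPartitionOf_of_sum (N := n)
  · refine antitone_nat_of_succ_le fun i => ?_
    have hi := hf.antitone (Nat.le_add_right i 1)
    simp only [cornerMove, Nat.add_one_ne_zero, if_false]
    rcases eq_or_ne i c with rfl | hic <;> split_ifs <;> omega
  · intro i hi
    rw [cornerMove, hf.eq_zero hi, if_neg (by omega), if_neg (by omega)]
  · have hbalance : ∑ i ∈ range n, cornerMove f c i + ∑ i ∈ range n, (if i < c + 1 then 1 else 0) =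
        ∑ i ∈ range n, f i + ∑ i ∈ range n, if i = 0 then c + 1 else 0 := by
      rw [← sum_add_distrib, ← sum_add_distrib]
      refine sum_congr rfl fun i _ => Nat.sub_add_cancel ?_
      have hi : i < c + 1 → f c ≤ f i := fun hi => hf.antitone (Nat.lt_succ_iff.1 hi)
      split_ifs <;> omega
    rw [hf.2.2, sum_range_ite_lt hcn, sum_ite_eq', if_pos (mem_range.2 (by omega))] at hbalance
    simpa only [Nat.cast_id, mul_one, Nat.add_right_cancel_iff] using hbalance

theorem cornerMove_inj {n c c' : ℕ} {f g : ℕ → ℕ} (hf : IsPartitionOf n f) (hg : IsPartitionOf n g)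
    (hf01 : f 0 = f 1) (hg01 : g 0 = g 1) (hc : f (c + 1) < f c) (hc' : g (c' + 1) < g c')
    (h : cornerMove f c = cornerMove g c') : f = g ∧ c = c' := by
  have hc0 : c ≠ 0 := by rintro rfl; exact hc.ne' hf01
  have hc0' : c' ≠ 0 := by rintro rfl; exact hc'.ne' hg01
  -- `c + 1` is the excess of the first row of `cornerMove f c` over the second one
  obtain rfl : c = c' := by
    have hf0 := hf.antitone (Nat.zero_le c)
    have hg0 := hg.antitone (Nat.zero_le c')
    have h0 := congrFun h 0
    have h1 := congrFun h 1
    simp only [cornerMove, if_true, one_ne_zero, if_false, Nat.succ_pos', Nat.lt_add_left_iff_pos,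
      Nat.pos_of_ne_zero hc0, Nat.pos_of_ne_zero hc0'] at h0 h1
    omega
  refine ⟨funext fun i => ?_, rfl⟩
  have hi := congrFun h i
  have hfi : i < c + 1 → f c ≤ f i := fun h => hf.antitone (Nat.lt_succ_iff.1 h)
  have hgi : i < c + 1 → g c ≤ g i := fun h => hg.antitone (Nat.lt_succ_iff.1 h)
  simp only [cornerMove] at hi
  split_ifs at hi <;> omega

theorem asympFreqLE_many_corners {D : ℕ} (hD : 0 < D) :
    AsympFreqLE partitions
      (fun f => f 0 = f 1 ∧ ∃ C : Finset ℕ, D ≤ #C ∧ ∀ c ∈ C, f (c + 1) < f c) (1 / D) := by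
  refine .of_moves hD (fun f c => f 0 = f 1 ∧ f (c + 1) < f c) cornerMove ?_ ?_ ?_
  · rintro n f - ⟨hf01, C, hDC, hC⟩
    exact ⟨C, hDC, fun c hc => ⟨hf01, hC c hc⟩⟩
  · intro n f hf c hc
    exact mem_partitions.2 (isPartitionOf_cornerMove (mem_partitions.1 hf) hc.2)
  · intro n f hf g hg c c' hc hc' h
    exact cornerMove_inj (mem_partitions.1 hf) (mem_partitions.1 hg) hc.1 hc'.1 hc.2 hc'.2 h

/-- The corners of a partition of `n`, given as the rows which are longer than the next one. -/
def corners (n : ℕ) (f : ℕ → ℕ) : Finset ℕ := {i ∈ range n | f (i + 1) < f i}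

theorem IsPartitionOf.apply_succ_eq {n i : ℕ} {f : ℕ → ℕ} (hf : IsPartitionOf n f)
    (hi : i ∉ corners n f) : f (i + 1) = f i := by
  rcases lt_or_ge i n with hin | hin
  · have hle : ¬ f (i + 1) < f i := fun h => hi (mem_filter.2 ⟨mem_range.2 hin, h⟩)
    exact le_antisymm (hf.antitone i.le_succ) (not_lt.1 hle)
  · rw [hf.eq_zero hin, hf.eq_zero (hin.trans i.le_succ)]

theorem le_of_image_corners_eq {n : ℕ} {f g : ℕ → ℕ} (hf : IsPartitionOf n f)
    (hg : IsPartitionOf n g)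
    (h : (corners n f).image (fun i => (i, f i)) = (corners n g).image fun i => (i, g i)) :
    f ≤ g := by
  intro i
  rcases le_total n i with hi | hi
  · simp only [hf.eq_zero hi, Nat.zero_le]
  induction hi using Nat.decreasingInduction with
  | self => simp only [hf.eq_zero le_rfl, Nat.zero_le]
  | of_succ i _ ih =>
    by_cases hc : i ∈ corners n f
    · have hmem := mem_image_of_mem (fun i => (i, f i)) hc
      rw [h, mem_image] at hmem
      obtain ⟨j, -, hj⟩ := hmem
      obtain ⟨rfl, hji⟩ := Prod.mk.inj hj
      exact hji.ge
    · calc f i = f (i + 1) := (hf.apply_succ_eq hc).symm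
        _ ≤ g (i + 1) := ih
        _ ≤ g i := hg.antitone i.le_succ

theorem card_few_corners_le (n D : ℕ) :
    #{f ∈ partitions n | #(corners n f) < D} ≤ D * ((n + 1) ^ 2) ^ D := by
  calc #{f ∈ partitions n | #(corners n f) < D}
      ≤ #((range D).biUnion fun c => powersetCard c (range (n + 1) ×ˢ range (n + 1))) := by
        apply card_le_card_of_injOn fun f => (corners n f).image fun i => (i, f i)
        · intro f hf
          simp only [mem_coe, mem_filter, mem_partitions] at hf
          simp only [mem_coe, mem_biUnion, mem_range, mem_powersetCard]
          refine ⟨_, hf.2, ?_, card_image_of_injective _ fun i j h => (Prod.mk.inj h).1⟩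
          refine image_subset_iff.2 fun i hi => mem_product.2 ⟨?_, ?_⟩
          · exact mem_range.2 ((mem_range.1 (mem_filter.1 hi).1).trans n.lt_succ_self)
          · exact mem_range.2 (Nat.lt_succ_iff.2 (hf.1.apply_le i))
        · intro f hf g hg h
          simp only [mem_coe, mem_filter, mem_partitions] at hf hg
          exact le_antisymm (le_of_image_corners_eq hf.1 hg.1 h)
            (le_of_image_corners_eq hg.1 hf.1 h.symm)
    _ ≤ ∑ c ∈ range D, #(powersetCard c (range (n + 1) ×ˢ range (n + 1))) := card_biUnion_le
    _ ≤ ∑ c ∈ range D, ((n + 1) ^ 2) ^ D := by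
        refine sum_le_sum fun c hc => ?_
        rw [card_powersetCard, card_product, card_range, ← sq]
        exact (Nat.choose_le_pow _ _).trans
          (Nat.pow_le_pow_right (by positivity) (mem_range.1 hc).le)
    _ = D * ((n + 1) ^ 2) ^ D := by rw [sum_const, card_range, smul_eq_mul]

/-- The partition of `n` whose columns have length `x + 1` for `x ∈ A`, and length `1` otherwise. -/
def partitionOfColumns (n : ℕ) (A : Finset ℕ) : ℕ → ℕ :=
  fun i => #{x ∈ A | i ≤ x} + if i = 0 then n - ∑ x ∈ A, (x + 1) else 0

theorem isPartitionOf_partitionOfColumns {n : ℕ} {A : Finset ℕ} (hA : ∑ x ∈ A, (x + 1) ≤ n) :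
    IsPartitionOf n (partitionOfColumns n A) := by
  have hlt : ∀ x ∈ A, x < n + 1 := fun x hx =>
    ((Nat.lt_succ_self x).trans_le (single_le_sum (f := fun x => x + 1)
      (fun _ _ => Nat.zero_le _) hx)).trans_le (hA.trans n.le_succ)
  apply isPartitionOf_of_sum (N := n + 1)
  · refine antitone_nat_of_succ_le fun i => Nat.add_le_add ?_ ?_
    · exact card_le_card (monotone_filter_right _ fun x _ hx => i.le_succ.trans hx)
    · rw [if_neg i.succ_ne_zero]
      exact Nat.zero_le _
  · intro i hi
    rw [partitionOfColumns, if_neg (by omega), add_zero, card_eq_zero, filter_eq_empty_iff]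
    exact fun x hx => not_le.2 ((hlt x hx).trans_le hi)
  · have hcolumn : ∀ x ∈ A, ∑ i ∈ range (n + 1), (if i ≤ x then 1 else 0) = x + 1 := fun x hx => by
      simpa only [Nat.lt_succ_iff, mul_one, Nat.cast_id] using
        sum_range_ite_lt (M := ℕ) (hlt x hx) 1
    simp only [partitionOfColumns, card_filter]
    rw [sum_add_distrib, sum_comm, sum_congr rfl hcolumn, sum_ite_eq',
      if_pos (mem_range.2 n.succ_pos), Nat.add_sub_cancel' hA]

theorem partitionOfColumns_apply {n i : ℕ} (A : Finset ℕ) (hi : i ≠ 0) :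
    partitionOfColumns n A i = partitionOfColumns n A (i + 1) + if i ∈ A then 1 else 0 := by
  simp only [partitionOfColumns, if_neg hi, if_neg i.succ_ne_zero, card_filter, add_zero]
  rw [← sum_ite_eq' A i fun _ => 1, ← sum_add_distrib]
  refine sum_congr rfl fun x _ => ?_
  split_ifs <;> omega

theorem injOn_partitionOfColumns (n : ℕ) :
    Set.InjOn (partitionOfColumns n) {A | 0 ∉ A} := by
  intro A hA B hB hAB
  ext i
  rcases eq_or_ne i 0 with rfl | hi
  · exact iff_of_false hA hB
  · have hmem := partitionOfColumns_apply (n := n) A hi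
    rw [hAB, partitionOfColumns_apply B hi] at hmem
    by_cases hiA : i ∈ A <;> by_cases hiB : i ∈ B <;> simp [hiA, hiB] at hmem ⊢

theorem two_pow_le_card_partitions {k n : ℕ} (h : k ^ 2 ≤ n) : 2 ^ (k - 1) ≤ #(partitions n) := by
  rw [← Nat.card_Ico, ← card_powerset]
  apply card_le_card_of_injOn (partitionOfColumns n)
  · intro A hA
    refine mem_partitions.2 (isPartitionOf_partitionOfColumns ?_)
    calc ∑ x ∈ A, (x + 1) ≤ ∑ x ∈ range k, (x + 1) :=
          sum_le_sum_of_subset ((mem_powerset.1 hA).trans fun _ hx =>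
            mem_range.2 (mem_Ico.1 hx).2)
      _ ≤ ∑ _x ∈ range k, k := sum_le_sum fun _ hx => mem_range.1 hx
      _ = k ^ 2 := by rw [sum_const, card_range, smul_eq_mul, sq]
      _ ≤ n := h
  · refine (injOn_partitionOfColumns n).mono ?_
    intro A hA h0
    exact absurd (mem_Ico.1 (mem_powerset.1 hA h0)).1 (by norm_num)

theorem eventually_const_mul_pow_le_card_partitions {C : ℝ} (hC : 0 ≤ C) (d : ℕ) :
    ∀ᶠ n : ℕ in Filter.atTop, C * (n + 1) ^ d ≤ #(partitions n) := by
  have hsqrt : Filter.Tendsto (fun n => Nat.sqrt n + 1) Filter.atTop Filter.atTop :=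
    Filter.tendsto_atTop.2 fun b => (Filter.eventually_ge_atTop (b ^ 2)).mono fun n hn =>
      (Nat.le_sqrt'.2 hn).trans (Nat.le_succ _)
  have hgrowth := ((tendsto_pow_const_div_const_pow_of_one_lt (2 * d)
    (one_lt_two (α := ℝ))).const_mul (4 * C)).comp hsqrt
  rw [mul_zero] at hgrowth
  filter_upwards [hgrowth.eventually_lt_const one_pos] with n hn
  set m := Nat.sqrt n
  have hpoly : 4 * C * (m + 1 : ℝ) ^ (2 * d) < 2 ^ (m + 1) := by
    rw [← one_mul ((2 : ℝ) ^ (m + 1)), ← div_lt_iff₀ (by positivity), mul_div_assoc]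
    exact_mod_cast hn
  have hmany : 2 ^ (m + 1) ≤ 4 * #(partitions n) := by
    calc 2 ^ (m + 1) ≤ 2 ^ (m - 1 + 2) := Nat.pow_le_pow_right two_pos (by omega)
      _ = 4 * 2 ^ (m - 1) := by ring
      _ ≤ 4 * #(partitions n) := Nat.mul_le_mul_left 4 (two_pow_le_card_partitions (Nat.sqrt_le' n))
  have hmany' : (2 : ℝ) ^ (m + 1) ≤ 4 * #(partitions n) := by exact_mod_cast hmany
  have hm : (n + 1 : ℝ) ≤ (m + 1) ^ 2 := by exact_mod_cast Nat.lt_succ_sqrt' n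
  calc C * (n + 1) ^ d ≤ C * ((m + 1) ^ 2) ^ d := by gcongr
    _ = C * (m + 1) ^ (2 * d) := by rw [← pow_mul]
    _ ≤ #(partitions n) := by linarith

theorem asympFreqLE_few_corners (D : ℕ) :
    AsympFreqLE partitions (fun f => ¬ ∃ C : Finset ℕ, D ≤ #C ∧ ∀ c ∈ C, f (c + 1) < f c) 0 := by
  classical
  rw [asympFreqLE_iff]
  intro η hη
  filter_upwards [eventually_const_mul_pow_le_card_partitions (C := D / η) (by positivity) (2 * D)]
    with n hn
  calc (#{f ∈ partitions n | ¬ ∃ C : Finset ℕ, D ≤ #C ∧ ∀ c ∈ C, f (c + 1) < f c} : ℝ)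
      ≤ #{f ∈ partitions n | #(corners n f) < D} := by
        refine Nat.cast_le.2 (card_le_card (monotone_filter_right _ fun f _ hf => ?_))
        by_contra hD
        exact hf ⟨corners n f, not_lt.1 hD, fun c hc => (mem_filter.1 hc).2⟩
    _ ≤ D * ((n + 1) ^ 2) ^ D := by exact_mod_cast card_few_corners_le n D
    _ = η * (D / η * (n + 1) ^ (2 * D)) := by
        rw [pow_mul]
        field_simp
    _ ≤ (0 + η) * #(partitions n) := by
        rw [zero_add]
        gcongr

theorem asympFreqLE_apply_zero_eq_apply_one : AsympFreqLE partitions (fun f => f 0 = f 1) 0 := by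
  refine .of_forall_add fun η hη => ?_
  obtain ⟨D, hD⟩ := exists_nat_one_div_lt hη
  refine (((asympFreqLE_many_corners D.succ_pos).or
    (asympFreqLE_few_corners (D + 1))).mono fun n f _ hf => ?_).mono_right ?_
  · exact (em _).imp (fun h => ⟨hf, h⟩) id
  · push_cast
    linarith

theorem eventually_card_partitions_succ_le {η : ℝ} (hη : 0 < η) :
    ∀ᶠ n in Filter.atTop, (1 - η) * (#(partitions (n + 1)) : ℝ) ≤ #(partitions n) := by
  have hfreq := asympFreqLE_iff.1 asympFreqLE_apply_zero_eq_apply_one η hη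
  filter_upwards [(Filter.tendsto_add_atTop_nat 1).eventually hfreq] with n hn
  have hsucc : (#(partitions (n + 1)) : ℝ) ≤
      #(partitions n) + #{f ∈ partitions (n + 1) | f 0 = f 1} := by
    exact_mod_cast card_partitions_succ_le n
  linarith

theorem eventually_card_partitions_add_le (k : ℕ) {η : ℝ} (hη : 0 < η) :
    ∀ᶠ n in Filter.atTop, (1 - η) * (#(partitions (n + k)) : ℝ) ≤ #(partitions n) := by
  induction k generalizing η with
  | zero =>
    refine Filter.Eventually.of_forall fun n => ?_
    exact mul_le_of_le_one_left (Nat.cast_nonneg _) (by linarith)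
  | succ k ih =>
    filter_upwards [ih (half_pos hη), (Filter.tendsto_add_atTop_nat k).eventually
      (eventually_card_partitions_succ_le (half_pos hη))] with n hk hsucc
    have hmono : (#(partitions (n + k)) : ℝ) ≤ #(partitions (n + k + 1)) :=
      Nat.cast_le.2 (card_partitions_mono (Nat.le_succ _))
    have := mul_le_mul_of_nonneg_left hmono (half_pos hη).le
    rw [← add_assoc]
    linarith

theorem asympFreqLE_partitions_apply_lt (l t : ℕ) :
    AsympFreqLE partitions (fun f => f l < t) 0 := by
  refine .of_compl_injOn (k := (l + 1) * t) (fun _ => eventually_card_partitions_add_le _)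
    (.false partitions) (fun f i => f i + if i < l + 1 then t else 0) ?_ fun n => ?_
  · intro n f hf _
    refine ⟨mem_partitions.2 ((mem_partitions.1 hf).add_rows (l + 1) t), ?_⟩
    simp only [Nat.lt_succ_self, if_true, not_lt, Nat.le_add_left]
  · exact (add_rows_injective (l + 1) t).injOn

/-! ### Frobenius coordinates -/

theorem antitone_of_lt_iff {f g : ℕ → ℕ} (h : ∀ i j, i < f j ↔ j < g i) : Antitone f :=
  fun _ _ hij => le_of_forall_lt fun _ hk => (h _ _).2 (hij.trans_lt ((h _ _).1 hk))

theorem le_apply_of_lt_iff {f g : ℕ → ℕ} {d k : ℕ} (h : ∀ i j, i < f j ↔ j < g i)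
    (hd : ∀ i, i < d ↔ i < f i) (hk : k < d) : d ≤ g k := by
  refine le_of_forall_lt fun m hm => ?_
  rw [← h]
  rcases le_total k m with hkm | hmk
  · exact hkm.trans_lt ((hd m).1 hm)
  · exact ((hd k).1 hk).trans_le (antitone_of_lt_iff h hmk)

theorem sum_range_add_card_eq {f g : ℕ → ℕ} {d N : ℕ} (h : ∀ i j, i < f j ↔ j < g i)
    (hd : ∀ i, i < d ↔ i < f i) (hN : g 0 ≤ N) :
    ∑ i ∈ range N, f i + ∑ _i ∈ range d, d = ∑ i ∈ range d, (f i + g i) := by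
  have hgN : ∀ k, g k ≤ N := fun k => (antitone_of_lt_iff (fun i j => (h j i).symm)
    k.zero_le).trans hN
  have hdg : ∀ k < d, d ≤ g k := fun k => le_apply_of_lt_iff h hd
  have hdN : d ≤ N := by
    rcases d.eq_zero_or_pos with rfl | hpos
    · exact N.zero_le
    · exact (hdg 0 hpos).trans hN
  have hbelow : ∀ i ∈ Ico d N, f i = #{k ∈ range d | k < f i} := by
    intro i hi
    have hfi : f i ≤ d := (antitone_of_lt_iff h (mem_Ico.1 hi).1).trans
      (not_lt.1 fun hlt => lt_irrefl d ((hd d).2 hlt))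
    rw [card_filter_range_lt, min_eq_left hfi]
  have hcolumn : ∀ k ∈ range d, #{i ∈ Ico d N | k < f i} + d = g k := by
    intro k hk
    have hIco : {i ∈ Ico d N | k < f i} = Ico d (g k) := by
      ext i
      have := hgN k
      rw [mem_filter, mem_Ico, mem_Ico, h]
      omega
    rw [hIco, Nat.card_Ico, Nat.sub_add_cancel (hdg k (mem_range.1 hk))]
  rw [← sum_range_add_sum_Ico _ hdN, sum_congr rfl hbelow]
  simp_rw [card_filter]
  rw [sum_comm]
  simp_rw [← card_filter]
  rw [add_assoc, ← sum_add_distrib, sum_congr rfl hcolumn, sum_add_distrib]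

theorem sum_range_eq_sum_hook {f g : ℕ → ℕ} {d N : ℕ} (h : ∀ i j, i < f j ↔ j < g i)
    (hd : ∀ i, i < d ↔ i < f i) (hN : g 0 ≤ N) :
    ((∑ i ∈ range N, f i : ℕ) : ℤ) =
      ∑ i ∈ range d, (((f i : ℤ) - i - 1) + ((g i : ℤ) - i - 1) + 1) := by
  have hodd : ∀ d : ℕ, ∑ i ∈ range d, (2 * (i : ℤ) + 1) = ∑ _i ∈ range d, (d : ℤ) := by
    intro d
    induction d with
    | zero => rfl
    | succ d ih =>
      rw [sum_range_succ, ih]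
      simp only [sum_const, card_range, nsmul_eq_mul]
      push_cast
      ring
  have hcount : ((∑ i ∈ range N, f i : ℕ) : ℤ) + ∑ _i ∈ range d, (d : ℤ) =
      ∑ i ∈ range d, ((f i : ℤ) + g i) := by
    exact_mod_cast sum_range_add_card_eq h hd hN
  rw [eq_sub_of_add_eq hcount, ← hodd d, ← sum_sub_distrib]
  exact sum_congr rfl fun i _ => by ring

theorem lt_card_filter_range_iff {d j : ℕ} {P : ℕ → Prop} [DecidablePred P]
    (hP : ∀ k l, k ≤ l → l < d → P l → P k) : j < #{k ∈ range d | P k} ↔ j < d ∧ P j := by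
  have hex : ∃ k, ¬ (k < d ∧ P k) := ⟨d, fun h => lt_irrefl d h.1⟩
  have hinit : ∀ k, k < d ∧ P k ↔ k < Nat.find hex := by
    intro k
    rw [Nat.lt_find_iff]
    exact ⟨fun hk l hl => not_not.2 ⟨hl.trans_lt hk.1, hP l k hl hk.1 hk.2⟩,
      fun hk => not_not.1 (hk k le_rfl)⟩
  have hrange : {k ∈ range d | P k} = range (Nat.find hex) := by
    ext k
    rw [mem_filter, mem_range, mem_range, hinit]
  rw [hrange, card_range, hinit]

/-- The ambient type of the Frobenius coordinates `(a₀ > a₁ > ⋯ | b₀ > b₁ > ⋯)` of a partition: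
the Durfee size and, for each colour, a sequence of coordinates; the colour `true` stands for rows
(`aᵢ`) and `false` for columns (`bᵢ`). Sequences are padded with zeros, and coordinates are
integers so that they can be shifted and subtracted. -/
@[ext]
structure FrobeniusCoords where
  durfee : ℕ
  coord : Bool → ℕ → ℤ

/-- `s` is the system of Frobenius coordinates of a partition of `m`: the coordinates are
nonnegative and strictly decreasing, and the principal hooks have total size `m`. -/
structure IsFrobeniusCoordsOf (m : ℤ) (s : FrobeniusCoords) : Prop where
  eq_zero : ∀ c i, s.durfee ≤ i → s.coord c i = 0
  succ_lt : ∀ c i, i + 1 < s.durfee → s.coord c (i + 1) < s.coord c i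
  nonneg : ∀ c i, i < s.durfee → 0 ≤ s.coord c i
  sum_hook : ∑ i ∈ range s.durfee, (s.coord true i + s.coord false i + 1) = m

namespace IsFrobeniusCoordsOf

variable {m : ℤ} {s : FrobeniusCoords} {i j : ℕ}

theorem add_le (h : IsFrobeniusCoordsOf m s) (c : Bool) (hij : i ≤ j) (hj : j < s.durfee) :
    s.coord c j + j ≤ s.coord c i + i := by
  induction j, hij using Nat.le_induction with
  | base => rfl
  | succ j _ ih =>
    have hrec := ih (by omega)
    have hlt := h.succ_lt c j hj
    push_cast
    omega

theorem strictAntiOn (h : IsFrobeniusCoordsOf m s) (c : Bool) :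
    StrictAntiOn (s.coord c) (Set.Iio s.durfee) := by
  intro i _ j hj hij
  have hle := h.add_le c hij.le hj
  omega

theorem durfee_le_add (h : IsFrobeniusCoordsOf m s) (c : Bool) (hi : i < s.durfee) :
    (s.durfee : ℤ) ≤ s.coord c i + i + 1 := by
  have hle := h.add_le c (i := i) (j := s.durfee - 1) (by omega) (by omega)
  have hlast := h.nonneg c (s.durfee - 1) (by omega)
  omega

end IsFrobeniusCoordsOf

/-- The partition with given Frobenius coordinates (for `c = true`) or its conjugate (for
`c = false`). Below the Durfee square, rows are read off the coordinates of the columns. -/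
noncomputable def toPartition (s : FrobeniusCoords) (c : Bool) (i : ℕ) : ℕ :=
  if i < s.durfee then (s.coord c i).toNat + i + 1
  else #{k ∈ range s.durfee | i ≤ (s.coord (!c) k).toNat + k}

theorem lt_toPartition_self_iff (s : FrobeniusCoords) (c : Bool) (i : ℕ) :
    i < toPartition s c i ↔ i < s.durfee := by
  unfold toPartition
  split_ifs with hi
  · omega
  · refine iff_of_false (not_lt.2 ?_) hi
    exact (card_filter_le _ _).trans ((card_range _).trans_le (not_lt.1 hi))

theorem toPartition_durfee_le (s : FrobeniusCoords) (c : Bool) :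
    toPartition s c s.durfee ≤ s.durfee :=
  not_lt.1 fun h => lt_irrefl _ ((lt_toPartition_self_iff s c _).1 h)

theorem lt_toPartition_iff {m : ℤ} {s : FrobeniusCoords} (h : IsFrobeniusCoordsOf m s) (c : Bool)
    (i j : ℕ) : i < toPartition s c j ↔ j < toPartition s (!c) i := by
  have hcard : ∀ (c : Bool) (i j : ℕ), j < #{k ∈ range s.durfee | i ≤ (s.coord c k).toNat + k} ↔
      j < s.durfee ∧ i ≤ (s.coord c j).toNat + j := by
    refine fun c i j => lt_card_filter_range_iff fun k l hkl hl hil => ?_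
    have hle := h.add_le c hkl hl
    have hnonneg := h.nonneg c l hl
    omega
  unfold toPartition
  rw [Bool.not_not]
  split_ifs with hj hi hi
  · have hcj := h.durfee_le_add c hj
    have hci := h.durfee_le_add (!c) hi
    omega
  · rw [hcard]
    omega
  · rw [hcard]
    omega
  · rw [hcard, hcard]
    omega

theorem coord_eq_toPartition_sub {m : ℤ} {s : FrobeniusCoords} (h : IsFrobeniusCoordsOf m s)
    (c : Bool) {i : ℕ} (hi : i < s.durfee) :
    s.coord c i = (toPartition s c i : ℤ) - i - 1 := by
  have hnonneg := h.nonneg c i hi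
  rw [toPartition, if_pos hi]
  omega

theorem conjugate_toPartition {m : ℤ} {s : FrobeniusCoords} (h : IsFrobeniusCoordsOf m s) :
    conjugate (toPartition s true) = toPartition s false :=
  conjugate_eq_of_lt_iff fun i j => (lt_toPartition_iff h true i j).symm

theorem isPartitionOf_toPartition {n : ℕ} {s : FrobeniusCoords} (h : IsFrobeniusCoordsOf n s) :
    IsPartitionOf n (toPartition s true) := by
  refine isPartitionOf_of_sum (N := toPartition s false 0)
    (antitone_of_lt_iff (lt_toPartition_iff h true)) (fun i hi => ?_) ?_
  · rw [← Nat.le_zero]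
    exact not_lt.1 fun hlt => hi.not_gt ((lt_toPartition_iff h true 0 i).1 hlt)
  · have hsum := sum_range_eq_sum_hook (lt_toPartition_iff h true)
      (fun i => (lt_toPartition_self_iff s true i).symm) le_rfl
    refine Nat.cast_injective (R := ℤ) (hsum.trans (Eq.trans ?_ h.sum_hook))
    refine sum_congr rfl fun i hi => ?_
    rw [coord_eq_toPartition_sub h true (mem_range.1 hi),
      coord_eq_toPartition_sub h false (mem_range.1 hi), Bool.not_true]

/-- The Frobenius coordinates of a partition `f` of `n`. -/
noncomputable def ofPartition (n : ℕ) (f : ℕ → ℕ) : FrobeniusCoords where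
  durfee := #{i ∈ range n | i < f i}
  coord c i :=
    if i < #{i ∈ range n | i < f i} then (cond c f (conjugate f) i : ℤ) - i - 1 else 0

theorem lt_durfee_ofPartition_iff {n : ℕ} {f : ℕ → ℕ} (hf : IsPartitionOf n f) (i : ℕ) :
    i < (ofPartition n f).durfee ↔ i < f i := by
  refine (lt_card_filter_range_iff fun k l hkl _ hl => ?_).trans
    (and_iff_right_of_imp fun hi => hi.trans_le (hf.apply_le i))
  exact (hkl.trans_lt hl).trans_le (hf.antitone hkl)

theorem coord_ofPartition {n : ℕ} {f : ℕ → ℕ} (c : Bool) {i : ℕ}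
    (hi : i < (ofPartition n f).durfee) :
    (ofPartition n f).coord c i = (cond c f (conjugate f) i : ℤ) - i - 1 :=
  if_pos hi

theorem isFrobeniusCoordsOf_ofPartition {n : ℕ} {f : ℕ → ℕ} (hf : IsPartitionOf n f) :
    IsFrobeniusCoordsOf n (ofPartition n f) := by
  have hlt : ∀ i j, i < f j ↔ j < conjugate f i := fun i j => (lt_conjugate_iff hf i j).symm
  have hd := lt_durfee_ofPartition_iff hf
  have hantitone : ∀ c, Antitone (cond c f (conjugate f)) := by
    rintro (_ | _)
    · exact antitone_of_lt_iff fun i j => (hlt j i).symm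
    · exact hf.antitone
  refine ⟨fun c i hi => if_neg (not_lt.2 hi), fun c i hi => ?_, fun c i hi => ?_, ?_⟩
  · rw [coord_ofPartition c hi, coord_ofPartition c (i.lt_succ_self.trans hi)]
    have hle := hantitone c (Nat.le_add_right i 1)
    push_cast
    omega
  · have hif : i < cond c f (conjugate f) i := by
      cases c
      · exact (hlt i i).1 ((hd i).1 hi)
      · exact (hd i).1 hi
    rw [coord_ofPartition c hi]
    omega
  · have hcolumns : conjugate f 0 ≤ n := by
      rw [conjugate_eq_card hf]
      exact (card_filter_le _ _).trans (card_range n).le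
    have hsum := sum_range_eq_sum_hook hlt hd hcolumns
    rw [hf.sum_range le_rfl] at hsum
    rw [hsum]
    refine sum_congr rfl fun i hi => ?_
    rw [coord_ofPartition true (mem_range.1 hi), coord_ofPartition false (mem_range.1 hi)]
    rfl

theorem toPartition_ofPartition {n : ℕ} {f : ℕ → ℕ} (hf : IsPartitionOf n f) :
    toPartition (ofPartition n f) true = f := by
  funext i
  unfold toPartition
  split_ifs with hi
  · have hif := (lt_durfee_ofPartition_iff hf i).1 hi
    rw [coord_ofPartition true hi, cond_true]
    omega
  · have hfi : f i ≤ (ofPartition n f).durfee := by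
      refine le_of_forall_lt fun k hk => (lt_durfee_ofPartition_iff hf k).2 (hk.trans_le ?_)
      rw [lt_durfee_ofPartition_iff hf, not_lt] at hi
      exact hf.antitone (hk.le.trans hi)
    refine Eq.trans (congrArg card (filter_congr fun k hk => ?_))
      ((card_filter_range_lt _ (f i)).trans (min_eq_left hfi))
    have hk := mem_range.1 hk
    have hkf : k < conjugate f k :=
      (lt_conjugate_iff hf k k).2 ((lt_durfee_ofPartition_iff hf k).1 hk)
    rw [Bool.not_true, coord_ofPartition false hk, cond_false, ← lt_conjugate_iff hf]
    omega

theorem ofPartition_toPartition {n : ℕ} {s : FrobeniusCoords} (h : IsFrobeniusCoordsOf n s) :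
    ofPartition n (toPartition s true) = s := by
  have hlt : ∀ i, i < (ofPartition n (toPartition s true)).durfee ↔ i < s.durfee := fun i =>
    (lt_durfee_ofPartition_iff (isPartitionOf_toPartition h) i).trans
      (lt_toPartition_self_iff s true i)
  have hcond : ∀ c, cond c (toPartition s true) (conjugate (toPartition s true)) =
      toPartition s c := by
    rintro (_ | _)
    · exact conjugate_toPartition h
    · rfl
  ext c i
  · exact le_antisymm (le_of_forall_lt fun i => (hlt i).1) (le_of_forall_lt fun i => (hlt i).2)
  · rcases lt_or_ge i s.durfee with hi | hi
    · rw [coord_ofPartition c ((hlt i).2 hi), hcond, coord_eq_toPartition_sub h c hi]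
    · rw [h.eq_zero c i hi]
      exact if_neg ((hlt i).not.2 (not_lt.2 hi))

open Classical in
/-- The finite set of all Frobenius coordinates of partitions of `n`. -/
noncomputable def frobeniusCoords (n : ℕ) : Finset FrobeniusCoords :=
  (partitions n).image (ofPartition n)

theorem mem_frobeniusCoords {n : ℕ} {s : FrobeniusCoords} :
    s ∈ frobeniusCoords n ↔ IsFrobeniusCoordsOf n s := by
  simp only [frobeniusCoords, mem_image, mem_partitions]
  constructor
  · rintro ⟨f, hf, rfl⟩
    exact isFrobeniusCoordsOf_ofPartition hf
  · exact fun h => ⟨_, isPartitionOf_toPartition h, ofPartition_toPartition h⟩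

theorem injOn_ofPartition (n : ℕ) : Set.InjOn (ofPartition n) (partitions n) :=
  Set.LeftInvOn.injOn (f₁' := fun s => toPartition s true) fun _ hf =>
    toPartition_ofPartition (mem_partitions.1 hf)

theorem card_frobeniusCoords (n : ℕ) : #(frobeniusCoords n) = #(partitions n) := by
  classical
  exact card_image_of_injOn (injOn_ofPartition n)

theorem asympFreqLE_durfee_le (J : ℕ) :
    AsympFreqLE frobeniusCoords (fun s => s.durfee ≤ J) 0 := by
  refine (asympFreqLE_partitions_apply_lt J (J + 1)).of_injOn
    (fun _ s => toPartition s true)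
    (fun n => (card_frobeniusCoords n).symm) (fun n s hs hJ => ?_) fun n => ?_
  · have hs := mem_frobeniusCoords.1 hs
    refine ⟨mem_partitions.2 (isPartitionOf_toPartition hs), Nat.lt_succ_of_le ?_⟩
    exact ((antitone_of_lt_iff (lt_toPartition_iff hs true) hJ).trans
      (toPartition_durfee_le s true)).trans hJ
  · exact Set.LeftInvOn.injOn (f₁' := ofPartition n) fun s hs =>
      ofPartition_toPartition (mem_frobeniusCoords.1 hs)

/-- Over every threshold, the coordinates of colour `c` have at most as much total excess as those
of the other colour. This is how dominance between a partition and its conjugate is seen by the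
Frobenius coordinates; unlike dominance it does not refer to the order within each colour. -/
def ExcessDominated (c : Bool) (s : FrobeniusCoords) : Prop :=
  ∀ t : ℤ, ∑ i ∈ range s.durfee, max (s.coord c i - t) 0 ≤
    ∑ i ∈ range s.durfee, max (s.coord (!c) i - t) 0

theorem excessDominated_ofPartition {n : ℕ} {f : ℕ → ℕ} (hf : IsPartitionOf n f) {c : Bool}
    (h : DominatedBy (cond c f (conjugate f)) (cond (!c) f (conjugate f))) :
    ExcessDominated c (ofPartition n f) := by
  have hpartial : ∀ c, ∀ k ≤ (ofPartition n f).durfee,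
      ∑ i ∈ range k, (ofPartition n f).coord c i =
        (∑ i ∈ range k, cond c f (conjugate f) i : ℕ) - ∑ i ∈ range k, ((i : ℤ) + 1) := by
    intro c k hk
    push_cast
    rw [← sum_sub_distrib]
    refine sum_congr rfl fun i hi => ?_
    rw [coord_ofPartition c ((mem_range.1 hi).trans_le hk), sub_sub]
  have hcoords := isFrobeniusCoordsOf_ofPartition hf
  refine sum_max_sub_le_of_antitoneOn (hcoords.strictAntiOn c).antitoneOn fun k hk => ?_
  rw [hpartial c k hk, hpartial (!c) k hk]
  exact sub_le_sub_right (Nat.cast_le.2 (h k)) _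

/-! ### Gaps between consecutive coordinates -/

namespace FrobeniusCoords

/-- The `l`-th gap of the coordinates of colour `c`, normalised so that it may be any natural
number. -/
def gap (s : FrobeniusCoords) (c : Bool) (l : ℕ) : ℤ :=
  s.coord c l - s.coord c (l + 1) - 1

/-- Shift the `l + 1` largest coordinates of colour `c` by `δ`, thereby increasing the gap `(c, l)`
by `δ` and the size of the partition by `(l + 1) * δ`. -/
def shift (s : FrobeniusCoords) (c : Bool) (l : ℕ) (δ : ℤ) : FrobeniusCoords where
  durfee := s.durfee
  coord c' i := s.coord c' i + if c' = c ∧ i ≤ l then δ else 0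

/-- Increase the gap `(c, i)` by `τ * (l + 1)` at the expense of the gap `(c', l)`, which decreases
by `τ * (i + 1)`, so that the size of the partition does not change. -/
def transfer (s : FrobeniusCoords) (c : Bool) (i : ℕ) (c' : Bool) (l : ℕ) (τ : ℤ) :
    FrobeniusCoords :=
  (s.shift c i (τ * (l + 1))).shift c' l (-(τ * (i + 1)))

theorem sum_gap (s : FrobeniusCoords) (c : Bool) (j : ℕ) :
    ∑ i ∈ range j, (s.gap c i + 1) = s.coord c 0 - s.coord c j := by
  rw [← sum_range_sub' (s.coord c)]
  exact sum_congr rfl fun i _ => sub_add_cancel _ _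

theorem gap_shift_self (s : FrobeniusCoords) (c : Bool) (l : ℕ) (δ : ℤ) :
    (s.shift c l δ).gap c l = s.gap c l + δ := by
  simp only [gap, shift, le_refl, and_self, if_true, Nat.not_succ_le_self, and_false, if_false]
  ring

theorem gap_shift_of_ne (s : FrobeniusCoords) {c c' : Bool} {l l' : ℕ} (δ : ℤ)
    (h : (c', l') ≠ (c, l)) : (s.shift c l δ).gap c' l' = s.gap c' l' := by
  have hiff : c' = c ∧ l' + 1 ≤ l ↔ c' = c ∧ l' ≤ l := by
    refine and_congr_right fun hc => ⟨fun hl => (Nat.le_succ l').trans hl, fun hl => ?_⟩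
    exact lt_of_le_of_ne hl fun hl' => h (Prod.ext hc hl')
  simp only [gap, shift, hiff]
  ring

theorem shift_injective (c : Bool) (l : ℕ) (δ : ℤ) :
    Function.Injective fun s : FrobeniusCoords => s.shift c l δ := by
  intro s t h
  obtain ⟨hdurfee, hcoord⟩ := FrobeniusCoords.ext_iff.1 h
  refine FrobeniusCoords.ext hdurfee (funext fun c' => funext fun i => ?_)
  exact add_right_cancel (congrFun (congrFun hcoord c') i)

theorem transfer_injective (c : Bool) (i : ℕ) (c' : Bool) (l : ℕ) (τ : ℤ) :
    Function.Injective fun s : FrobeniusCoords => s.transfer c i c' l τ :=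
  (shift_injective c' l _).comp (shift_injective c i _)

theorem gap_transfer (s : FrobeniusCoords) {c c' : Bool} {i l : ℕ} (τ : ℤ)
    (h : (c, i) ≠ (c', l)) : (s.transfer c i c' l τ).gap c i = s.gap c i + τ * (l + 1) := by
  rw [transfer, gap_shift_of_ne _ _ h, gap_shift_self]

theorem coord_transfer_sub (s : FrobeniusCoords) (i k : ℕ) (τ : ℤ) :
    (s.transfer true i false k τ).coord true i - (s.transfer true i false k τ).coord false k =
      s.coord true i - s.coord false k + τ * (i + k + 2) := by
  simp only [transfer, shift, le_refl, and_true, if_true, Bool.true_eq_false, Bool.false_eq_true,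
    false_and, if_false]
  ring

end FrobeniusCoords

namespace IsFrobeniusCoordsOf

variable {m : ℤ} {s : FrobeniusCoords} {c c' : Bool} {i l : ℕ}

theorem gap_nonneg (h : IsFrobeniusCoordsOf m s) (c : Bool) (hl : l + 1 < s.durfee) :
    0 ≤ s.gap c l := by
  have hlt := h.succ_lt c l hl
  unfold FrobeniusCoords.gap
  omega

theorem shift {δ : ℤ} (h : IsFrobeniusCoordsOf m s) (hl : l + 1 < s.durfee)
    (hδ : 0 ≤ s.gap c l + δ) : IsFrobeniusCoordsOf (m + (l + 1) * δ) (s.shift c l δ) := by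
  unfold FrobeniusCoords.gap at hδ
  constructor
  · intro c' i hi
    dsimp only [FrobeniusCoords.shift] at hi ⊢
    rw [h.eq_zero c' i hi, if_neg (by omega), add_zero]
  · intro c' i hi
    dsimp only [FrobeniusCoords.shift] at hi ⊢
    have hlt := h.succ_lt c' i hi
    rcases eq_or_ne c' c with rfl | hc
    · simp only [true_and]
      rcases eq_or_ne i l with rfl | hil <;> split_ifs <;> omega
    · simpa only [hc, false_and, if_false, add_zero] using hlt
  · intro c' i hi
    dsimp only [FrobeniusCoords.shift] at hi ⊢
    have hi0 := h.nonneg c' i hi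
    split_ifs with hil
    · obtain ⟨rfl, hil⟩ := hil
      have hle := h.add_le c' hil (by omega)
      have hl0 := h.nonneg c' (l + 1) hl
      omega
    · omega
  · have hshift := sum_range_ite_lt (by omega : l + 1 ≤ s.durfee) δ
    rw [Nat.cast_succ] at hshift
    rw [← h.sum_hook, ← hshift, ← sum_add_distrib]
    refine sum_congr rfl fun i _ => ?_
    simp only [FrobeniusCoords.shift, Nat.lt_succ_iff]
    cases c <;>
      simp only [Bool.true_eq_false, Bool.false_eq_true, true_and, false_and, if_false] <;>
      ring

theorem transfer {τ : ℤ} (h : IsFrobeniusCoordsOf m s) (hne : (c, i) ≠ (c', l))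
    (hi : i + 1 < s.durfee) (hl : l + 1 < s.durfee) (hτ0 : 0 ≤ τ)
    (hτ : τ * (i + 1) ≤ s.gap c' l) : IsFrobeniusCoordsOf m (s.transfer c i c' l τ) := by
  have hgap := h.gap_nonneg c hi
  have hraised := h.shift (c := c) (δ := τ * (l + 1)) hi (by positivity)
  have hlowered := hraised.shift (c := c') (δ := -(τ * (i + 1))) hl
    (by rw [FrobeniusCoords.gap_shift_of_ne _ _ hne.symm]; linarith)
  have hm : m + (i + 1) * (τ * (l + 1)) + (l + 1) * -(τ * (i + 1)) = m := by ring
  rwa [hm] at hlowered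

end IsFrobeniusCoordsOf

theorem asympFreqLE_gap_lt (c : Bool) (l B : ℕ) :
    AsympFreqLE frobeniusCoords (fun s => s.gap c l < B) 0 := by
  refine .of_compl_injOn (k := (l + 1) * B) (fun η hη => ?_) (asympFreqLE_durfee_le (l + 1))
    (fun s => s.shift c l B) (fun n s hs hd => ?_)
    fun n => (FrobeniusCoords.shift_injective c l B).injOn
  · simp_rw [card_frobeniusCoords]
    exact eventually_card_partitions_add_le _ hη
  · rw [not_le] at hd
    have hs := mem_frobeniusCoords.1 hs
    have hgap := hs.gap_nonneg c hd
    refine ⟨mem_frobeniusCoords.2 ?_, ?_⟩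
    · exact_mod_cast hs.shift (c := c) (δ := B) hd (by positivity)
    · rw [FrobeniusCoords.gap_shift_self]
      omega

theorem asympFreqLE_coord_true_eq_coord_false (i k : ℕ) :
    AsympFreqLE frobeniusCoords (fun s => s.coord true i = s.coord false k) 0 := by
  refine .of_forall_add fun η hη => ?_
  obtain ⟨K, hK⟩ := exists_nat_one_div_lt hη
  refine .of_not_and (asympFreqLE_durfee_le (max i k + 1)) ?_
  refine .of_not_and (asympFreqLE_gap_lt false k (K * (i + 1))) ?_
  refine .mono_right (a := 1 / (K + 1 : ℕ)) ?_ (by push_cast; linarith)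
  refine .of_moves K.succ_pos
    (fun s τ => (K * (i + 1) ≤ s.gap false k ∧ max i k + 1 < s.durfee ∧
      s.coord true i = s.coord false k) ∧ τ < K + 1)
    (fun s τ => s.transfer true i false k τ) ?_ ?_ ?_
  · rintro n s - ⟨hgap, hd, heq⟩
    push_cast [not_lt] at hgap
    exact ⟨range (K + 1), (card_range _).ge, fun τ hτ =>
      ⟨⟨hgap, not_le.1 hd, heq⟩, mem_range.1 hτ⟩⟩
  · rintro n s hs τ ⟨⟨hgap, hd, -⟩, hτ⟩
    refine mem_frobeniusCoords.2 ((mem_frobeniusCoords.1 hs).transfer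
      (by simp only [ne_eq, Prod.mk.injEq, Bool.true_eq_false, false_and, not_false_eq_true])
      (by omega) (by omega) (by positivity) (le_trans ?_ hgap))
    have hτK : (τ : ℤ) ≤ K := by omega
    gcongr
  -- The difference of the two coordinates tells how much was transferred.
  · rintro n s - s' - τ τ' ⟨⟨-, -, heq⟩, -⟩ ⟨⟨-, -, heq'⟩, -⟩ htransfer
    have hdiff := s.coord_transfer_sub i k τ
    rw [htransfer, s'.coord_transfer_sub, heq, heq', sub_self, sub_self, zero_add, zero_add]
      at hdiff
    have hpos : (0 : ℤ) < i + k + 2 := by positivity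
    obtain rfl : τ = τ' := by exact_mod_cast (mul_right_cancel₀ hpos.ne' hdiff).symm
    exact ⟨FrobeniusCoords.transfer_injective _ _ _ _ _ htransfer, rfl⟩

theorem transferred_amount_le {K k i l : ℕ} {x y : ℤ} (hk : k < K) (hx : 0 ≤ x)
    (hxy : 2 * K * (i + 1) * x ≤ (l + 1) * y) (hy : 2 * K * (i + 1) ≤ y) :
    ((K - 1) * (x / (l + 1)) + k) * (i + 1) ≤ y := by
  have hl : (0 : ℤ) < l + 1 := by positivity
  have hq : 0 ≤ x / ((l : ℤ) + 1) := Int.ediv_nonneg hx hl.le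
  have hqx : x / ((l : ℤ) + 1) * (l + 1) ≤ x := Int.ediv_mul_le _ hl.ne'
  set q := x / ((l : ℤ) + 1)
  have hqy : 2 * K * (i + 1) * q ≤ y := by
    refine le_of_mul_le_mul_left ?_ hl
    calc ((l : ℤ) + 1) * (2 * K * (i + 1) * q) = 2 * K * (i + 1) * (q * (l + 1)) := by ring
      _ ≤ 2 * K * (i + 1) * x := by gcongr
      _ ≤ (l + 1) * y := hxy
  have hkK : (k : ℤ) * (i + 1) ≤ K * (i + 1) := by gcongr
  have hqi : 0 ≤ q * (i + 1) := by positivity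
  linarith

theorem asympFreqLE_mul_gap_le_mul_gap {c c' : Bool} {i l : ℕ} (hne : (c, i) ≠ (c', l)) {K : ℕ}
    (hK : 0 < K) : AsympFreqLE frobeniusCoords
      (fun s => 2 * K * (i + 1) * s.gap c i ≤ (l + 1) * s.gap c' l) (1 / K) := by
  refine .of_not_and (asympFreqLE_durfee_le (max i l + 1)) ?_
  refine .of_not_and (asympFreqLE_gap_lt c' l (2 * K * (i + 1))) ?_
  have hl : (0 : ℤ) < l + 1 := by positivity
  -- The transfer turns the quotient `q = gap c i / (l + 1)` into `K * q + k`, so that `k` is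
  -- recovered as a remainder modulo `K`.
  refine .of_moves hK
    (fun s k => (2 * K * (i + 1) ≤ s.gap c' l ∧ max i l + 1 < s.durfee ∧
      2 * K * (i + 1) * s.gap c i ≤ (l + 1) * s.gap c' l) ∧ k < K)
    (fun s k => s.transfer c i c' l ((K - 1) * (s.gap c i / (l + 1)) + k)) ?_ ?_ ?_
  · rintro n s - ⟨hgap, hd, hsmall⟩
    push_cast [not_lt] at hgap
    exact ⟨range K, (card_range _).ge, fun k hk =>
      ⟨⟨hgap, not_le.1 hd, hsmall⟩, mem_range.1 hk⟩⟩
  · rintro n s hs k ⟨⟨hgap, hd, hsmall⟩, hk⟩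
    have hs := mem_frobeniusCoords.1 hs
    have hi0 : 0 ≤ s.gap c i := hs.gap_nonneg c (by omega)
    have hq : 0 ≤ s.gap c i / ((l : ℤ) + 1) := Int.ediv_nonneg hi0 hl.le
    have hK1 : (0 : ℤ) ≤ K - 1 := by omega
    exact mem_frobeniusCoords.2 (hs.transfer hne (by omega) (by omega) (by positivity)
      (transferred_amount_le hk hi0 hsmall hgap))
  · rintro n s - s' - k k' ⟨-, hk⟩ ⟨-, hk'⟩ htransfer
    have hquotient : ∀ (s : FrobeniusCoords) (k : ℕ),
        (s.transfer c i c' l ((K - 1) * (s.gap c i / (l + 1)) + k)).gap c i / (l + 1) =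
          k + K * (s.gap c i / (l + 1)) := by
      intro s k
      rw [FrobeniusCoords.gap_transfer _ _ hne, Int.add_mul_ediv_right _ _ hl.ne']
      ring
    have hremainder : ∀ (q : ℤ) (k : ℕ), k < K → (k + K * q) % K = k := fun q k hk => by
      rw [Int.add_mul_emod_self_left, Int.emod_eq_of_lt (by positivity) (by exact_mod_cast hk)]
    have heq := hquotient s k
    rw [htransfer, hquotient s'] at heq
    have hmod := congrArg (· % (K : ℤ)) heq
    rw [hremainder _ k hk, hremainder _ k' hk'] at hmod
    obtain rfl : k = k' := by exact_mod_cast hmod.symm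
    have hq := mul_left_cancel₀ (by exact_mod_cast hK.ne') (add_left_cancel heq)
    rw [hq] at htransfer
    exact ⟨FrobeniusCoords.transfer_injective _ _ _ _ _ htransfer, rfl⟩

/-! ### Growth of the span of the largest coordinates -/

theorem sum_le_two_mul_sum_of_mul_le {ι : Type*} [DecidableEq ι] {I I' : Finset ι} {w g : ι → ℝ}
    {x : ℝ} (hI' : I' ⊆ I) (hx : 0 < x) (hg : ∀ i ∈ I, 0 ≤ g i)
    (hwg : ∀ i ∈ I \ I', w i * x ≤ g i) (hsum : 2 * ∑ i ∈ I, g i ≤ (∑ i ∈ I, w i) * x) :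
    ∑ i ∈ I, w i ≤ 2 * ∑ i ∈ I', w i := by
  have hdiff : (∑ i ∈ I \ I', w i) * x ≤ ∑ i ∈ I, g i := by
    rw [sum_mul]
    exact (sum_le_sum hwg).trans
      (sum_le_sum_of_subset_of_nonneg sdiff_subset fun i hi _ => hg i hi)
  have hle : 2 * (∑ i ∈ I \ I', w i) ≤ ∑ i ∈ I, w i := by
    refine le_of_mul_le_mul_right ?_ hx
    linarith
  have hsplit := sum_sdiff (f := w) hI'
  linarith

/- Counted with the weights `1 / (i + 1)`, few of the gaps `(c, i)` are so small that they fail to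
contribute at least their weight, up to a constant, times the gap `(c', l)` to the sum. -/
theorem asympFreqLE_sum_gap_lt {c c' : Bool} {j l J K : ℕ} (hl : l < j) (hK : 0 < K)
    (hJ : (16 * j * K : ℝ) ≤ ∑ i ∈ Ico j J, (1 / (i + 1) : ℝ)) :
    AsympFreqLE frobeniusCoords
      (fun s => 1 ≤ s.gap c' l ∧ ∑ i ∈ Ico j J, s.gap c i < 4 * j * s.gap c' l)
      (2 * (1 / K)) := by
  have hj0 : (0 : ℝ) < j := Nat.cast_pos.2 (l.zero_le.trans_lt hl)
  have hK0 : (0 : ℝ) < K := Nat.cast_pos.2 hK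
  refine .of_not_and (asympFreqLE_durfee_le J) ?_
  refine AsympFreqLE.of_sum_weight_le (I := Ico j J) (w := fun i => 1 / (i + 1))
    (Q := fun (i : ℕ) s => 2 * K * ((i : ℤ) + 1) * s.gap c i ≤ (l + 1) * s.gap c' l) two_pos
    (fun i _ => by positivity) (lt_of_lt_of_le (by positivity) hJ) (fun i hi => ?_) ?_
  · refine asympFreqLE_mul_gap_le_mul_gap (fun h => ?_) hK
    exact (hl.trans_le (mem_Ico.1 hi).1).ne (Prod.mk.inj h).2.symm
  · rintro n s hs ⟨hd, hgap, hsum⟩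
    have hgap0 : (0 : ℝ) < s.gap c' l := by exact_mod_cast hgap
    have hsum' : ∑ i ∈ Ico j J, (s.gap c i : ℝ) ≤ 4 * j * s.gap c' l := by
      exact_mod_cast hsum.le
    refine ⟨{i ∈ Ico j J | 2 * K * ((i : ℤ) + 1) * s.gap c i ≤ (l + 1) * s.gap c' l},
      filter_subset _ _, fun i hi => (mem_filter.1 hi).2, ?_⟩
    refine sum_le_two_mul_sum_of_mul_le (g := fun i => (s.gap c i : ℝ))
      (x := s.gap c' l / (2 * K)) (filter_subset _ _) (by positivity) ?_ ?_ ?_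
    · intro i hi
      have hi := (mem_Ico.1 hi).2
      exact_mod_cast (mem_frobeniusCoords.1 hs).gap_nonneg c (by omega)
    · intro i hi
      simp only [mem_sdiff, mem_filter, mem_Ico, not_and, not_le] at hi
      have hlarge : ((l : ℝ) + 1) * s.gap c' l ≤ 2 * K * (i + 1) * s.gap c i := by
        exact_mod_cast (hi.2 hi.1).le
      have hl1 : (s.gap c' l : ℝ) ≤ (l + 1) * s.gap c' l :=
        le_mul_of_one_le_left hgap0.le (le_add_of_nonneg_left l.cast_nonneg)
      rw [div_mul_div_comm, one_mul, div_le_iff₀ (by positivity)]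
      linarith
    · calc 2 * ∑ i ∈ Ico j J, (s.gap c i : ℝ) ≤ 16 * j * K * (s.gap c' l / (2 * K)) := by
            field_simp
            linarith
        _ ≤ (∑ i ∈ Ico j J, (1 / (i + 1) : ℝ)) * (s.gap c' l / (2 * K)) := by gcongr

theorem IsFrobeniusCoordsOf.two_mul_coord_sub_le {m : ℤ} {s : FrobeniusCoords} {c c' : Bool}
    {j J : ℕ} (hs : IsFrobeniusCoordsOf m s) (hj : 0 < j) (hJ : J < s.durfee)
    (hgap : ∀ l < j, 1 ≤ s.gap c' l)
    (hsum : ∀ l < j, 4 * j * s.gap c' l ≤ ∑ i ∈ Ico j J, s.gap c i) :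
    2 * (s.coord c' 0 - s.coord c' j) ≤ s.coord c 0 - s.coord c J := by
  have hj' : (0 : ℤ) < j := Nat.cast_pos.2 hj
  have hnonneg : ∀ i ∈ range J, 0 ≤ s.gap c i := fun i hi =>
    hs.gap_nonneg c ((Nat.succ_le_of_lt (mem_range.1 hi)).trans_lt hJ)
  rw [← s.sum_gap c', ← s.sum_gap c]
  refine le_trans (le_of_mul_le_mul_left ?_ hj') (b := ∑ i ∈ Ico j J, s.gap c i) ?_
  · have hterm : ∀ l ∈ range j, 2 * j * (s.gap c' l + 1) ≤ ∑ i ∈ Ico j J, s.gap c i := by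
      intro l hl
      refine le_trans ?_ (hsum l (mem_range.1 hl))
      nlinarith [hgap l (mem_range.1 hl)]
    have htotal := sum_le_sum hterm
    rw [← mul_sum, sum_const, card_range, nsmul_eq_mul] at htotal
    linarith
  · calc ∑ i ∈ Ico j J, s.gap c i ≤ ∑ i ∈ range J, s.gap c i := by
          rw [range_eq_Ico] at hnonneg ⊢
          exact sum_le_sum_of_subset_of_nonneg (Ico_subset_Ico_left j.zero_le)
            fun i hi _ => hnonneg i hi
      _ ≤ ∑ i ∈ range J, (s.gap c i + 1) := sum_le_sum fun i _ => by omega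

theorem exists_asympFreqLE_coord_sub_lt {j : ℕ} (hj : 0 < j) {η : ℝ} (hη : 0 < η) :
    ∃ J > j, ∀ c c', AsympFreqLE frobeniusCoords
      (fun s => s.coord c 0 - s.coord c J < 2 * (s.coord c' 0 - s.coord c' j)) η := by
  obtain ⟨K, hK⟩ := exists_nat_gt (2 * j / η)
  have hj0 : (0 : ℝ) < j := Nat.cast_pos.2 hj
  have hK0 : (0 : ℝ) < K := lt_trans (by positivity) hK
  have hdiv := Real.tendsto_sum_range_one_div_nat_succ_atTop.eventually_ge_atTop
    (16 * j * K + ∑ i ∈ range j, (1 / (i + 1) : ℝ))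
  obtain ⟨J, hJ, hJj⟩ := (hdiv.and (Filter.eventually_gt_atTop j)).exists
  have hharmonic : (16 * j * K : ℝ) ≤ ∑ i ∈ Ico j J, (1 / (i + 1) : ℝ) := by
    rw [sum_Ico_eq_sub _ hJj.le]
    linarith
  refine ⟨J, hJj, fun c c' => ?_⟩
  have hsmall := AsympFreqLE.exists_mem (range j) fun l hl =>
    asympFreqLE_sum_gap_lt (c := c) (c' := c') (mem_range.1 hl) (Nat.cast_pos.1 hK0) hharmonic
  have hzero := AsympFreqLE.exists_mem (range j) fun l _ => asympFreqLE_gap_lt c' l 1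
  rw [sum_const_zero] at hzero
  refine .of_not_and (asympFreqLE_durfee_le J) (.of_not_and hzero ?_)
  refine (hsmall.mono fun n s hs hlt => ?_).mono_right ?_
  · obtain ⟨hgap, hd, hlt⟩ := hlt
    contrapose! hlt
    push_cast [mem_range, not_exists, not_and, not_lt] at hgap
    have hgap : ∀ l < j, 1 ≤ s.gap c' l := fun l hl => by simpa using hgap l hl
    exact (mem_frobeniusCoords.1 hs).two_mul_coord_sub_le hj (not_le.1 hd) hgap
      fun l hl => hlt l (mem_range.2 hl) (hgap l hl)
  · rw [sum_const, card_range, nsmul_eq_mul]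
    rw [div_lt_iff₀ hη] at hK
    rw [mul_one_div, mul_div_assoc', div_le_iff₀ hK0]
    linarith

/-! ### Random signed sums -/

section SignedSum

variable {ι R : Type*} [DecidableEq ι]

/-- The sum of the weights `h x`, `x ∈ Z`, counted with sign `+` on `S` and with sign `-` off `S`.
With `S` ranging over `Z.powerset` this is a sum of independent random signs. -/
def signedSum [AddCommGroup R] (Z : Finset ι) (h : ι → R) (S : Finset ι) : R :=
  ∑ x ∈ Z, if x ∈ S then h x else -h x

section AddCommGroup

variable [AddCommGroup R]

theorem signedSum_inter {X Y : Finset ι} (hXY : X ⊆ Y) (h : ι → R) (S : Finset ι) :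
    signedSum X h (S ∩ Y) = signedSum X h S :=
  sum_congr rfl fun x hx => by simp [hXY hx]

theorem signedSum_union {X Z : Finset ι} (hXZ : Disjoint X Z) (h : ι → R) (S : Finset ι) :
    signedSum (X ∪ Z) h S = signedSum X h S + signedSum Z h S :=
  sum_union hXZ

theorem signedSum_sdiff (Z : Finset ι) (h : ι → R) (S : Finset ι) :
    signedSum Z h (Z \ S) = -signedSum Z h S := by
  unfold signedSum
  rw [← sum_neg_distrib]
  refine sum_congr rfl fun x hx => ?_
  by_cases hS : x ∈ S <;> simp [hx, hS]

theorem sum_powerset_insert_signedSum {M : Type*} [AddCommMonoid M] {Z : Finset ι} {a : ι}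
    (ha : a ∉ Z) (h : ι → R) (F : R → M) :
    ∑ S ∈ (insert a Z).powerset, F (signedSum (insert a Z) h S) =
      ∑ S ∈ Z.powerset, F (-h a + signedSum Z h S) +
        ∑ S ∈ Z.powerset, F (h a + signedSum Z h S) := by
  rw [sum_powerset_insert ha]
  congr 1 <;> refine sum_congr rfl fun S hS => congrArg F ?_ <;> unfold signedSum <;>
    rw [sum_insert ha]
  · rw [if_neg fun haS => ha (mem_powerset.1 hS haS)]
  · rw [if_pos (mem_insert_self _ _)]
    refine congrArg _ (sum_congr rfl fun x hx => ?_)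
    have hxa : x ≠ a := fun hxa => ha (hxa ▸ hx)
    simp [hxa]

end AddCommGroup

theorem sum_add_signedSum_sq [CommRing R] (Z : Finset ι) (h : ι → R) (y : R) :
    ∑ S ∈ Z.powerset, (y + signedSum Z h S) ^ 2 = 2 ^ #Z * (y ^ 2 + ∑ x ∈ Z, h x ^ 2) := by
  induction Z using Finset.induction_on generalizing y with
  | empty => simp [signedSum]
  | insert a Z ha ih =>
    rw [sum_powerset_insert_signedSum ha h fun u => (y + u) ^ 2]
    simp only [← add_assoc, ih]
    rw [sum_insert ha, card_insert_of_notMem ha]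
    ring

variable [CommRing R] [LinearOrder R] [IsStrictOrderedRing R]

theorem sum_add_signedSum_pow_four_le (Z : Finset ι) (h : ι → R) (y : R) :
    ∑ S ∈ Z.powerset, (y + signedSum Z h S) ^ 4 ≤
      2 ^ #Z * (y ^ 4 + 6 * y ^ 2 * ∑ x ∈ Z, h x ^ 2 + 3 * (∑ x ∈ Z, h x ^ 2) ^ 2) := by
  induction Z using Finset.induction_on generalizing y with
  | empty => simp [signedSum]
  | insert a Z ha ih =>
    rw [sum_powerset_insert_signedSum ha h fun u => (y + u) ^ 4]
    simp only [← add_assoc]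
    refine (add_le_add (ih _) (ih _)).trans ?_
    rw [sum_insert ha, card_insert_of_notMem ha, ← mul_add, pow_succ (2 : R) (#Z),
      mul_assoc (2 ^ #Z) 2]
    refine mul_le_mul_of_nonneg_left ?_ (pow_nonneg zero_le_two _)
    nlinarith [sq_nonneg (h a ^ 2)]

/- Summing `36 V ^ 2 ≥ 12 V u - u ^ 2 - 6 V ^ 2`, where `u` is the squared signed sum and `V` its
mean, over the patterns with `V < 2 u`; the right hand side is nonpositive on the others. -/
theorem two_pow_card_le_mul_card_lt_two_mul_signedSum_sq {Z : Finset ι} {h : ι → R}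
    (hV : 0 < ∑ x ∈ Z, h x ^ 2) :
    2 ^ #Z ≤ 12 * #{S ∈ Z.powerset | ∑ x ∈ Z, h x ^ 2 < 2 * signedSum Z h S ^ 2} := by
  have second := sum_add_signedSum_sq Z h 0
  have fourth := sum_add_signedSum_pow_four_le Z h 0
  set V := ∑ x ∈ Z, h x ^ 2
  simp only [zero_add, ne_eq, OfNat.ofNat_ne_zero, not_false_eq_true, zero_pow, mul_zero,
    zero_mul] at second fourth
  have pointwise : ∀ S ∈ Z.powerset,
      12 * V * signedSum Z h S ^ 2 - signedSum Z h S ^ 4 - 6 * V ^ 2 ≤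
        if V < 2 * signedSum Z h S ^ 2 then 36 * V ^ 2 - 6 * V ^ 2 else 0 := by
    intro S _
    have hu : 0 ≤ signedSum Z h S ^ 2 := sq_nonneg _
    rw [show signedSum Z h S ^ 4 = (signedSum Z h S ^ 2) ^ 2 by ring]
    split_ifs
    · nlinarith [sq_nonneg (signedSum Z h S ^ 2 - 6 * V)]
    · nlinarith
  have total := sum_le_sum pointwise
  rw [sum_sub_distrib, sum_sub_distrib, ← mul_sum, second, sum_const, card_powerset,
    nsmul_eq_mul, ← sum_filter, sum_const, nsmul_eq_mul] at total
  push_cast at total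
  have hV' : 0 < 3 * V ^ 2 := by positivity
  rw [← Nat.cast_le (α := R)]
  push_cast
  refine le_of_mul_le_mul_right ?_ hV'
  nlinarith [Nat.cast_nonneg (α := R) #{S ∈ Z.powerset | V < 2 * signedSum Z h S ^ 2}]

theorem two_pow_card_le_mul_card_lt_signedSum {Z : Finset ι} {h : ι → R} {θ : R}
    (hθ : 2 * θ ^ 2 < ∑ x ∈ Z, h x ^ 2) :
    2 ^ #Z ≤ 24 * #{S ∈ Z.powerset | θ < signedSum Z h S} := by
  have large := two_pow_card_le_mul_card_lt_two_mul_signedSum_sq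
    ((mul_nonneg zero_le_two (sq_nonneg θ)).trans_lt hθ)
  have two_sided : #{S ∈ Z.powerset | ∑ x ∈ Z, h x ^ 2 < 2 * signedSum Z h S ^ 2} ≤
      #{S ∈ Z.powerset | θ < signedSum Z h S} + #{S ∈ Z.powerset | signedSum Z h S < -θ} := by
    refine le_trans (card_le_card fun S hS => ?_) (card_union_le _ _)
    simp only [mem_union, mem_filter] at hS ⊢
    by_contra! hle
    linarith [hS.2, sq_le_sq' (hle.2 hS.1) (hle.1 hS.1)]
  have symmetric : #{S ∈ Z.powerset | signedSum Z h S < -θ} ≤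
      #{S ∈ Z.powerset | θ < signedSum Z h S} := by
    refine card_le_card_of_injOn (Z \ ·) (fun S hS => ?_) fun S hS T hT hST => ?_
    · simp only [Finset.mem_coe, mem_filter, mem_powerset] at hS ⊢
      exact ⟨sdiff_subset, by rw [signedSum_sdiff]; exact lt_neg_of_lt_neg hS.2⟩
    · simp only [Finset.mem_coe, mem_filter, mem_powerset] at hS hT
      rw [← Finset.sdiff_sdiff_eq_self hS.1, ← Finset.sdiff_sdiff_eq_self hT.1]
      exact congrArg _ hST
  omega

theorem neg_sum_abs_le_signedSum (X : Finset ι) (h : ι → R) (S : Finset ι) :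
    -∑ x ∈ X, |h x| ≤ signedSum X h S := by
  rw [← sum_neg_distrib]
  refine sum_le_sum fun x _ => ?_
  split_ifs
  exacts [neg_abs_le _, neg_le_neg (le_abs_self _)]

/- With probability at least `1 / 24` the signed sum over `Z` exceeds `∑ x ∈ X, |h x|`, so that the
signs on `X` do not matter. -/
theorem mul_card_signedSum_union_nonpos_le {X Z : Finset ι} (hXZ : Disjoint X Z) {h : ι → R}
    (hV : 2 * (∑ x ∈ X, |h x|) ^ 2 < ∑ x ∈ Z, h x ^ 2) (B : Finset (Finset ι)) :
    24 * #{S ∈ (X ∪ Z).powerset | S ∩ X ∈ B ∧ signedSum (X ∪ Z) h S ≤ 0} ≤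
      23 * 2 ^ #Z * #B := by
  set θ := ∑ x ∈ X, |h x|
  have rare : 24 * #{S ∈ Z.powerset | ¬ θ < signedSum Z h S} ≤ 23 * 2 ^ #Z := by
    have hcard := card_filter_add_card_filter_not (s := Z.powerset) fun S => θ < signedSum Z h S
    rw [card_powerset] at hcard
    have := two_pow_card_le_mul_card_lt_signedSum hV
    omega
  have restrict : #{S ∈ (X ∪ Z).powerset | S ∩ X ∈ B ∧ signedSum (X ∪ Z) h S ≤ 0} ≤
      #(B ×ˢ {S ∈ Z.powerset | ¬ θ < signedSum Z h S}) := by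
    refine card_le_card_of_injOn (fun S => (S ∩ X, S ∩ Z)) (fun S hS => ?_)
      fun S hS T hT hST => ?_
    · simp only [Finset.mem_coe, mem_product, mem_filter, mem_powerset] at hS ⊢
      obtain ⟨-, hB, hsum⟩ := hS
      refine ⟨hB, inter_subset_right, ?_⟩
      rw [signedSum_union hXZ] at hsum
      rw [signedSum_inter Subset.rfl]
      linarith [neg_sum_abs_le_signedSum X h S]
    · simp only [Finset.mem_coe, mem_filter, mem_powerset] at hS hT
      obtain ⟨hX, hZ⟩ := Prod.ext_iff.1 hST
      dsimp only at hX hZ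
      rw [← inter_eq_left.2 hS.1, ← inter_eq_left.2 hT.1, inter_union_distrib_left,
        inter_union_distrib_left, hX, hZ]
  rw [card_product] at restrict
  calc 24 * #{S ∈ (X ∪ Z).powerset | S ∩ X ∈ B ∧ signedSum (X ∪ Z) h S ≤ 0}
      ≤ 24 * (#B * #{S ∈ Z.powerset | ¬ θ < signedSum Z h S}) := by gcongr
    _ = 24 * #{S ∈ Z.powerset | ¬ θ < signedSum Z h S} * #B := by ring
    _ ≤ 23 * 2 ^ #Z * #B := by gcongr

theorem signedSum_max_sub_zero (D S : Finset R) (a : R) :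
    signedSum D (fun x => max (x - a) 0) S = signedSum {x ∈ D | a < x} (fun x => x - a) S := by
  unfold signedSum
  rw [sum_filter]
  refine sum_congr rfl fun x _ => ?_
  dsimp only
  by_cases hax : a < x
  · rw [if_pos hax, max_eq_left (sub_nonneg.2 hax.le)]
  · rw [if_neg hax, max_eq_right (sub_nonpos.2 (not_lt.1 hax)), neg_zero, ite_self]

end SignedSum

/-! ### Sets with many scales -/

/-- The thresholds `t 0 ≥ t 1 ≥ ⋯ ≥ t L` exhibit `L` scales in `D`, a set bounded by `top`: at each
step the number of new elements lying in the upper half of the interval from the new threshold to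
`top` dwarfs the square of the number of old elements, and at most half of `D` is ever used. -/
structure IsScaleSequence (L : ℕ) (D : Finset ℤ) (top : ℤ) (t : ℕ → ℤ) : Prop where
  le_top : ∀ x ∈ D, x ≤ top
  succ_le : ∀ l < L, t (l + 1) ≤ t l
  sq_card_lt : ∀ l < L, 8 * #{x ∈ D | t l < x} ^ 2 <
    #{x ∈ D | t (l + 1) < x ∧ x ≤ t l ∧ 2 * (top - x) ≤ top - t (l + 1)}
  two_mul_card_le : 2 * #{x ∈ D | t L < x} ≤ #D

/-- The set `D` has a sequence of `L` scales; then most balanced signed sums over `D` of the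
excesses over a threshold take positive values. -/
def HasScales (L : ℕ) (D : Finset ℤ) : Prop :=
  ∃ top t, IsScaleSequence L D top t

theorem filter_lt_union_filter_lt_and_le (D : Finset ℤ) {a b : ℤ} (hba : b ≤ a) :
    {x ∈ D | a < x} ∪ {x ∈ D | b < x ∧ x ≤ a} = {x ∈ D | b < x} := by
  rw [← filter_or]
  refine filter_congr fun x _ => ?_
  omega

theorem disjoint_filter_lt_filter_lt_and_le (D : Finset ℤ) (a b : ℤ) :
    Disjoint {x ∈ D | a < x} {x ∈ D | b < x ∧ x ≤ a} :=
  disjoint_filter.2 fun _ _ ha hb => hb.2.not_gt ha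

theorem card_mul_sq_le_four_mul_sum_sq {Z : Finset ℤ} {b top : ℤ} (hb : b ≤ top) :
    #{x ∈ Z | 2 * (top - x) ≤ top - b} * (top - b) ^ 2 ≤ 4 * ∑ x ∈ Z, (x - b) ^ 2 := by
  rw [← nsmul_eq_mul, ← sum_const, mul_sum]
  refine (sum_le_sum fun x hx => ?_).trans
    (sum_le_sum_of_subset_of_nonneg (filter_subset _ _) fun x _ _ => by positivity)
  have hx' := (mem_filter.1 hx).2
  nlinarith

theorem two_mul_sq_sum_abs_lt_sum_sq {D : Finset ℤ} {a b top : ℤ} (hba : b ≤ a)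
    (htop : ∀ x ∈ D, x ≤ top)
    (hcard : 8 * #{x ∈ D | a < x} ^ 2 <
      #{x ∈ D | b < x ∧ x ≤ a ∧ 2 * (top - x) ≤ top - b}) :
    2 * (∑ x ∈ D with a < x, |x - b|) ^ 2 < ∑ x ∈ D with b < x ∧ x ≤ a, (x - b) ^ 2 := by
  set k := #{x ∈ D | a < x}
  obtain ⟨y, hy⟩ := card_pos.1 ((Nat.zero_le _).trans_lt hcard)
  have hb : b < top := (mem_filter.1 hy).2.1.trans_le (htop y (mem_filter.1 hy).1)
  have hold : ∑ x ∈ D with a < x, |x - b| ≤ k * (top - b) := by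
    rw [← nsmul_eq_mul]
    refine sum_le_card_nsmul _ _ _ fun x hx => ?_
    obtain ⟨hxD, hax⟩ := mem_filter.1 hx
    rw [abs_of_pos (by omega)]
    exact sub_le_sub_right (htop x hxD) b
  have hnew := card_mul_sq_le_four_mul_sum_sq (Z := {x ∈ D | b < x ∧ x ≤ a}) hb.le
  simp only [filter_filter, and_assoc] at hnew
  have hcard' : 8 * (k : ℤ) ^ 2 + 1 ≤
      #{x ∈ D | b < x ∧ x ≤ a ∧ 2 * (top - x) ≤ top - b} := by
    exact_mod_cast hcard
  have hsq : (∑ x ∈ D with a < x, |x - b|) ^ 2 ≤ (k * (top - b)) ^ 2 := by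
    gcongr
  have hpos : 0 < (top - b) ^ 2 := pow_pos (sub_pos.2 hb) 2
  nlinarith [mul_le_mul_of_nonneg_right hcard' hpos.le]

/-- The sign patterns `S` on the elements of `D` above `t l` for which none of the signed sums of
excesses over `t 0`, …, `t l` is positive. -/
def nonposSigns (D : Finset ℤ) (t : ℕ → ℤ) (l : ℕ) : Finset (Finset ℤ) :=
  {S ∈ ({x ∈ D | t l < x} : Finset ℤ).powerset |
    ∀ k ≤ l, signedSum {x ∈ D | t k < x} (fun x => x - t k) S ≤ 0}

namespace IsScaleSequence

variable {L : ℕ} {D : Finset ℤ} {top : ℤ} {t : ℕ → ℤ}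

theorem filter_lt_subset (ht : IsScaleSequence L D top t) {k l : ℕ} (hkl : k ≤ l) (hl : l ≤ L) :
    ({x ∈ D | t k < x} : Finset ℤ) ⊆ {x ∈ D | t l < x} := by
  induction l, hkl using Nat.le_induction with
  | base => exact Subset.rfl
  | succ l _ ih =>
    exact (ih (by omega)).trans
      (monotone_filter_right D fun x _ hx => (ht.succ_le l hl).trans_lt hx)

theorem mul_card_nonposSigns_succ_le (ht : IsScaleSequence L D top t) {l : ℕ} (hl : l < L) :
    24 * #(nonposSigns D t (l + 1)) ≤
      23 * 2 ^ #{x ∈ D | t (l + 1) < x ∧ x ≤ t l} * #(nonposSigns D t l) := by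
  refine le_trans (Nat.mul_le_mul_left _ (card_le_card fun S hS => ?_))
    (mul_card_signedSum_union_nonpos_le (disjoint_filter_lt_filter_lt_and_le D (t l) (t (l + 1)))
      (two_mul_sq_sum_abs_lt_sum_sq (ht.succ_le l hl) ht.le_top (ht.sq_card_lt l hl)) _)
  rw [filter_lt_union_filter_lt_and_le D (ht.succ_le l hl)]
  simp only [nonposSigns, mem_filter, mem_powerset] at hS ⊢
  refine ⟨hS.1, ⟨inter_subset_right, fun k hk => ?_⟩, hS.2 _ le_rfl⟩
  rw [signedSum_inter (ht.filter_lt_subset hk hl.le)]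
  exact hS.2 k (by omega)

theorem pow_mul_card_nonposSigns_le (ht : IsScaleSequence L D top t) {l : ℕ} (hl : l ≤ L) :
    24 ^ l * #(nonposSigns D t l) ≤ 23 ^ l * 2 ^ #{x ∈ D | t l < x} := by
  induction l with
  | zero =>
    simp only [pow_zero, one_mul]
    exact (card_filter_le _ _).trans (card_powerset _).le
  | succ l ih =>
    rw [← filter_lt_union_filter_lt_and_le D (ht.succ_le l hl),
      card_union_of_disjoint (disjoint_filter_lt_filter_lt_and_le D _ _)]
    set z := #{x ∈ D | t (l + 1) < x ∧ x ≤ t l}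
    calc 24 ^ (l + 1) * #(nonposSigns D t (l + 1))
        = 24 ^ l * (24 * #(nonposSigns D t (l + 1))) := by ring
      _ ≤ 24 ^ l * (23 * 2 ^ z * #(nonposSigns D t l)) :=
        Nat.mul_le_mul_left _ (ht.mul_card_nonposSigns_succ_le hl)
      _ = 23 * 2 ^ z * (24 ^ l * #(nonposSigns D t l)) := by ring
      _ ≤ 23 * 2 ^ z * (23 ^ l * 2 ^ #{x ∈ D | t l < x}) :=
        Nat.mul_le_mul_left _ (ih (by omega))
      _ = 23 ^ (l + 1) * 2 ^ (#{x ∈ D | t l < x} + z) := by ring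

theorem inter_mem_nonposSigns (ht : IsScaleSequence L D top t) {S : Finset ℤ}
    (hS : ∀ a, signedSum D (fun x => max (x - a) 0) S ≤ 0) :
    S ∩ {x ∈ D | t L < x} ∈ nonposSigns D t L := by
  refine mem_filter.2 ⟨mem_powerset.2 inter_subset_right, fun l hl => ?_⟩
  rw [signedSum_inter (ht.filter_lt_subset hl le_rfl), ← signedSum_max_sub_zero]
  exact hS (t l)

end IsScaleSequence

theorem two_mul_mul_choose_half_le (N : ℕ) :
    2 * (N * N.choose (N / 2)) ≤ (N + 1) * (N + 1).choose ((N + 1) / 2) := by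
  obtain ⟨q, rfl | rfl⟩ := Nat.even_or_odd' N
  · have hhalf : (2 * q + 1) / 2 = q := by omega
    have hsymm : (2 * q + 1).choose (q + 1) = (2 * q + 1).choose q :=
      Nat.choose_symm_of_eq_add (by omega)
    have hrec := Nat.add_one_mul_choose_eq (2 * q) q
    rw [hsymm] at hrec
    rw [hhalf, Nat.mul_div_cancel_left q two_pos]
    refine Nat.le_of_mul_le_mul_right (c := q + 1) ?_ q.succ_pos
    calc 2 * (2 * q * (2 * q).choose q) * (q + 1)
        = 4 * q * (q + 1) * (2 * q).choose q := by ring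
      _ ≤ (2 * q + 1) * (2 * q + 1) * (2 * q).choose q := Nat.mul_le_mul_right _ (by nlinarith)
      _ = (2 * q + 1) * ((2 * q + 1) * (2 * q).choose q) := by ring
      _ = (2 * q + 1) * (2 * q + 1).choose q * (q + 1) := by rw [hrec]; ring
  · have hhalf : (2 * q + 1) / 2 = q := by omega
    have hhalf' : (2 * q + 1 + 1) / 2 = q + 1 := by omega
    have hsymm : (2 * q + 1).choose (q + 1) = (2 * q + 1).choose q :=
      Nat.choose_symm_of_eq_add (by omega)
    rw [hhalf, hhalf', Nat.choose_succ_succ, hsymm]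
    nlinarith

theorem two_pow_mul_choose_half_le {m k : ℕ} (hkm : k ≤ m) :
    2 ^ k * m.choose (m / 2) ≤ 2 * (m + k).choose ((m + k) / 2) := by
  have hstep : 2 ^ k * (m * m.choose (m / 2)) ≤ (m + k) * (m + k).choose ((m + k) / 2) := by
    clear hkm
    induction k with
    | zero => simp
    | succ k ih =>
      calc 2 ^ (k + 1) * (m * m.choose (m / 2)) = 2 * (2 ^ k * (m * m.choose (m / 2))) := by ring
        _ ≤ 2 * ((m + k) * (m + k).choose ((m + k) / 2)) := by gcongr
        _ ≤ (m + (k + 1)) * (m + (k + 1)).choose ((m + (k + 1)) / 2) :=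
          two_mul_mul_choose_half_le (m + k)
  obtain rfl | hm := m.eq_zero_or_pos
  · simp [Nat.le_zero.1 hkm]
  refine Nat.le_of_mul_le_mul_left (c := m) ?_ hm
  calc m * (2 ^ k * m.choose (m / 2)) = 2 ^ k * (m * m.choose (m / 2)) := by ring
    _ ≤ (m + k) * (m + k).choose ((m + k) / 2) := hstep
    _ ≤ (m + m) * (m + k).choose ((m + k) / 2) := by gcongr
    _ = m * (2 * (m + k).choose ((m + k) / 2)) := by ring

theorem card_powersetCard_filter_inter_le {ι : Type*} [DecidableEq ι] {X D : Finset ι}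
    (hXD : X ⊆ D) (r : ℕ) (T : Finset ι) :
    #{S ∈ powersetCard r D | S ∩ X = T} ≤ (#D - #X).choose ((#D - #X) / 2) := by
  calc #{S ∈ powersetCard r D | S ∩ X = T} ≤ #(powersetCard (r - #T) (D \ X)) := by
        refine card_le_card_of_injOn (· \ X) (fun S hS => ?_) fun S hS S' hS' hSS' => ?_
        · simp only [Finset.mem_coe, mem_filter, mem_powersetCard] at hS ⊢
          obtain ⟨⟨hSD, hcard⟩, rfl⟩ := hS
          have := card_sdiff_add_card_inter S X
          exact ⟨sdiff_subset_sdiff hSD Subset.rfl, by omega⟩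
        · simp only [Finset.mem_coe, mem_filter] at hS hS'
          dsimp only at hSS'
          rw [← sdiff_union_inter S X, ← sdiff_union_inter S' X, hSS', hS.2, hS'.2]
    _ = (#D - #X).choose (r - #T) := by rw [card_powersetCard, card_sdiff_of_subset hXD]
    _ ≤ (#D - #X).choose ((#D - #X) / 2) := Nat.choose_le_middle _ _

open Classical in
theorem HasScales.pow_mul_card_signedSum_nonpos_le {L r : ℕ} {D : Finset ℤ} (hD : HasScales L D)
    (hr : #D = 2 * r) :
    24 ^ L * #{S ∈ powersetCard r D | ∀ a : ℤ, signedSum D (fun x => max (x - a) 0) S ≤ 0} ≤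
      2 * 23 ^ L * (2 * r).choose r := by
  obtain ⟨top, t, ht⟩ := hD
  set X : Finset ℤ := {x ∈ D | t L < x}
  have hXD : X ⊆ D := filter_subset _ _
  have hhalf : 2 * #X ≤ #D := ht.two_mul_card_le
  set m := #D - #X
  have hrestrict :
      #{S ∈ powersetCard r D | ∀ a : ℤ, signedSum D (fun x => max (x - a) 0) S ≤ 0} ≤
        m.choose (m / 2) * #(nonposSigns D t L) :=
    card_le_mul_card_image_of_maps_to (f := (· ∩ X))
      (fun S hS => ht.inter_mem_nonposSigns (mem_filter.1 hS).2) _ fun T _ =>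
      (card_le_card (filter_subset_filter _ (filter_subset _ _))).trans
        (card_powersetCard_filter_inter_le hXD r T)
  have hcentral : 2 ^ #X * m.choose (m / 2) ≤ 2 * (2 * r).choose r := by
    have hmX : m + #X = 2 * r := by omega
    have := two_pow_mul_choose_half_le (m := m) (k := #X) (by omega)
    rwa [hmX, Nat.mul_div_cancel_left _ two_pos] at this
  calc _ ≤ 24 ^ L * (m.choose (m / 2) * #(nonposSigns D t L)) := Nat.mul_le_mul_left _ hrestrict
    _ = m.choose (m / 2) * (24 ^ L * #(nonposSigns D t L)) := by ring
    _ ≤ m.choose (m / 2) * (23 ^ L * 2 ^ #X) :=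
      Nat.mul_le_mul_left _ (ht.pow_mul_card_nonposSigns_le le_rfl)
    _ = 23 ^ L * (2 ^ #X * m.choose (m / 2)) := by ring
    _ ≤ 23 ^ L * (2 * (2 * r).choose r) := Nat.mul_le_mul_left _ hcentral
    _ = 2 * 23 ^ L * (2 * r).choose r := by ring

/-! ### Recolouring pairs of sets -/

section Recolouring

variable {ι : Type*} [DecidableEq ι]

theorem union_union_sdiff_eq {E S U : Finset ι} (hEU : E ⊆ U) (hSU : S ⊆ U \ E) :
    E ∪ S ∪ U \ S = U := by
  rw [union_assoc, union_sdiff_of_subset (hSU.trans sdiff_subset), union_eq_right.2 hEU]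

theorem union_inter_sdiff_eq {E S U : Finset ι} (hEU : E ⊆ U) (hSU : S ⊆ U \ E) :
    (E ∪ S) ∩ (U \ S) = E := by
  ext x
  have hE := @hEU x
  have hS := @hSU x
  simp only [mem_sdiff, mem_inter, mem_union] at hS ⊢
  tauto

theorem card_symmDiff_of_card_eq {A B : Finset ι} (h : #A = #B) :
    #(symmDiff A B) = 2 * #(A \ B) := by
  have hAB := card_sdiff_add_card_inter A B
  have hBA := card_sdiff_add_card_inter B A
  rw [inter_comm] at hBA
  rw [symmDiff, sup_eq_union, card_union_of_disjoint disjoint_sdiff_sdiff]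
  omega

theorem eq_of_sdiff_eq_of_union_eq_of_inter_eq {p q : Finset ι × Finset ι}
    (hsdiff : p.1 \ p.2 = q.1 \ q.2) (hunion : p.1 ∪ p.2 = q.1 ∪ q.2)
    (hinter : p.1 ∩ p.2 = q.1 ∩ q.2) : p = q := by
  have hfst : p.1 = q.1 := by
    rw [← sdiff_union_inter p.1 p.2, hsdiff, hinter, sdiff_union_inter]
  refine Prod.ext hfst ?_
  ext x
  have hU := Finset.ext_iff.1 hunion x
  have hI := Finset.ext_iff.1 hinter x
  rw [hfst] at hU hI
  simp only [mem_union, mem_inter] at hU hI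
  tauto

/-- The family `P` of pairs of equinumerous sets is closed under recolouring: exchanging the roles
of elements belonging to exactly one of the two sets stays within `P`, as long as the two sets
remain equinumerous. -/
structure IsRecolourable (P : Finset (Finset ι × Finset ι)) : Prop where
  card_eq : ∀ p ∈ P, #p.1 = #p.2
  mem_of_union_of_inter : ∀ p ∈ P, ∀ q : Finset ι × Finset ι, q.1 ∪ q.2 = p.1 ∪ p.2 →
    q.1 ∩ q.2 = p.1 ∩ p.2 → #q.1 = #q.2 → q ∈ P

namespace IsRecolourable

variable {P : Finset (Finset ι × Finset ι)}

theorem choose_le_card_filter (hP : IsRecolourable P) {p : Finset ι × Finset ι} (hp : p ∈ P) :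
    (2 * #(p.1 \ p.2)).choose #(p.1 \ p.2) ≤
      #{q ∈ P | q.1 ∪ q.2 = p.1 ∪ p.2 ∧ q.1 ∩ q.2 = p.1 ∩ p.2} := by
  set r := #(p.1 \ p.2)
  set U := p.1 ∪ p.2
  set E := p.1 ∩ p.2
  have hEU : E ⊆ U := inter_subset_left.trans subset_union_left
  have hdiff : #(U \ E) = 2 * r := by
    rw [← card_symmDiff_of_card_eq (hP.card_eq p hp), symmDiff_eq_sup_sdiff_inf]
    rfl
  rw [← hdiff, ← card_powersetCard]
  have hcard : #U = #E + 2 * r := by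
    rw [← hdiff, add_comm, card_sdiff_add_card_eq_card hEU]
  refine card_le_card_of_injOn (fun S => (E ∪ S, U \ S)) (fun S hS => ?_)
    fun S hS T hT hST => ?_
  · simp only [Finset.mem_coe, mem_powersetCard, mem_filter] at hS ⊢
    obtain ⟨hSU, hSr⟩ := hS
    have hunion := union_union_sdiff_eq hEU hSU
    have hinter := union_inter_sdiff_eq hEU hSU
    refine ⟨hP.mem_of_union_of_inter p hp _ hunion hinter ?_, hunion, hinter⟩
    rw [card_union_of_disjoint (disjoint_sdiff.mono_right hSU),
      card_sdiff_of_subset (hSU.trans sdiff_subset)]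
    omega
  · simp only [Finset.mem_coe, mem_powersetCard] at hS hT
    have hsdiff : U \ S = U \ T := (Prod.ext_iff.1 hST).2
    rw [← Finset.sdiff_sdiff_eq_self (hS.1.trans sdiff_subset), hsdiff,
      Finset.sdiff_sdiff_eq_self (hT.1.trans sdiff_subset)]

/- Conditionally on their union and intersection, the pairs in `P` correspond to the balanced
two-colourings of the symmetric difference. -/
theorem mul_card_filter_le (hP : IsRecolourable P) {N : Finset ι → Finset ι → Prop}
    [∀ D, DecidablePred (N D)] {a b : ℕ}
    (hN : ∀ D r, #D = 2 * r → a * #{S ∈ powersetCard r D | N D S} ≤ b * (2 * r).choose r) :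
    a * #{p ∈ P | N (symmDiff p.1 p.2) (p.1 \ p.2)} ≤ b * #P := by
  let key : Finset ι × Finset ι → Finset ι × Finset ι := fun p => (p.1 ∪ p.2, p.1 ∩ p.2)
  have hkey : ∀ p ∈ P, key p ∈ P.image key := fun p => mem_image_of_mem key
  rw [card_eq_sum_card_fiberwise hkey,
    card_eq_sum_card_fiberwise (fun p hp => hkey p (filter_subset _ _ hp)), mul_sum, mul_sum]
  refine sum_le_sum fun k hk => ?_
  obtain ⟨p, hp, rfl⟩ := mem_image.1 hk
  set r := #(p.1 \ p.2)
  set D := symmDiff p.1 p.2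
  have hDr : #D = 2 * r := card_symmDiff_of_card_eq (hP.card_eq p hp)
  have hcolour : #{q ∈ {q ∈ P | N (symmDiff q.1 q.2) (q.1 \ q.2)} | key q = key p} ≤
      #{S ∈ powersetCard r D | N D S} := by
    refine card_le_card_of_injOn (fun q => q.1 \ q.2) (fun q hq => ?_) fun q hq q' hq' hqq' => ?_
    · simp only [Finset.mem_coe, mem_filter, mem_powersetCard, key, Prod.mk.injEq] at hq ⊢
      obtain ⟨⟨hqP, hqN⟩, hunion, hinter⟩ := hq
      have hD : symmDiff q.1 q.2 = D := by
        simp only [D, symmDiff_eq_sup_sdiff_inf, sup_eq_union, inf_eq_inter, hunion, hinter]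
      have hcard := card_symmDiff_of_card_eq (hP.card_eq q hqP)
      rw [hD] at hcard hqN
      exact ⟨⟨hD ▸ le_sup_left (a := q.1 \ q.2), by omega⟩, hqN⟩
    · simp only [Finset.mem_coe, mem_filter, key, Prod.mk.injEq] at hq hq'
      exact eq_of_sdiff_eq_of_union_eq_of_inter_eq hqq' (hq.2.1.trans hq'.2.1.symm)
        (hq.2.2.trans hq'.2.2.symm)
  have hall := hP.choose_le_card_filter hp
  simp only [key, Prod.mk.injEq] at hcolour ⊢
  calc _ ≤ a * #{S ∈ powersetCard r D | N D S} := Nat.mul_le_mul_left _ hcolour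
    _ ≤ b * (2 * r).choose r := hN D r hDr
    _ ≤ _ := Nat.mul_le_mul_left _ hall

end IsRecolourable

theorem signedSum_symmDiff {R : Type*} [AddCommGroup R] (A B : Finset ι) (h : ι → R) :
    signedSum (symmDiff A B) h (A \ B) = ∑ x ∈ A, h x - ∑ x ∈ B, h x := by
  have hdisj : Disjoint (A \ B) (B \ A) := disjoint_sdiff_sdiff
  rw [symmDiff, sup_eq_union, signedSum_union hdisj, ← sum_sdiff_sub_sum_sdiff, sub_eq_add_neg,
    ← sum_neg_distrib]
  exact congrArg₂ _ (sum_congr rfl fun x hx => if_pos hx)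
    (sum_congr rfl fun x hx => if_neg (disjoint_right.1 hdisj hx))

end Recolouring

/-! ### Frobenius coordinates as a pair of sets -/

theorem exists_strictAnti_enumeration (A : Finset ℤ) : ∃ f : ℕ → ℤ, (∀ i, #A ≤ i → f i = 0) ∧
    (∀ i, i + 1 < #A → f (i + 1) < f i) ∧ (range #A).image f = A := by
  refine ⟨fun i => if hi : i < #A then A.orderEmbOfFin rfl (Fin.rev ⟨i, hi⟩) else 0,
    fun i hi => dif_neg hi.not_gt, fun i hi => ?_, ?_⟩
  · dsimp only
    rw [dif_pos hi, dif_pos (by omega)]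
    exact (A.orderEmbOfFin rfl).strictMono (Fin.rev_lt_rev.2 (Nat.lt_succ_self i))
  · ext x
    simp only [mem_image, mem_range]
    constructor
    · rintro ⟨i, hi, rfl⟩
      rw [dif_pos hi]
      exact orderEmbOfFin_mem A rfl _
    · intro hx
      obtain ⟨k, rfl⟩ : x ∈ Set.range (A.orderEmbOfFin rfl) := by rwa [range_orderEmbOfFin]
      exact ⟨k.rev, k.rev.isLt, by rw [dif_pos k.rev.isLt, Fin.eta, Fin.rev_rev]⟩

namespace FrobeniusCoords

/-- The set of coordinates of `s` of colour `c`. -/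
def coordSet (s : FrobeniusCoords) (c : Bool) : Finset ℤ :=
  (range s.durfee).image (s.coord c)

theorem mem_coordSet {s : FrobeniusCoords} {c : Bool} {x : ℤ} :
    x ∈ s.coordSet c ↔ ∃ i < s.durfee, s.coord c i = x := by
  simp [coordSet]

end FrobeniusCoords

namespace IsFrobeniusCoordsOf

variable {m : ℤ} {s : FrobeniusCoords}

theorem injOn (h : IsFrobeniusCoordsOf m s) (c : Bool) :
    Set.InjOn (s.coord c) (range s.durfee) := by
  rw [coe_range]
  exact (h.strictAntiOn c).injOn

theorem card_coordSet (h : IsFrobeniusCoordsOf m s) (c : Bool) : #(s.coordSet c) = s.durfee := by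
  rw [FrobeniusCoords.coordSet, card_image_of_injOn (h.injOn c), card_range]

theorem sum_coordSet (h : IsFrobeniusCoordsOf m s) (c : Bool) (f : ℤ → ℤ) :
    ∑ x ∈ s.coordSet c, f x = ∑ i ∈ range s.durfee, f (s.coord c i) :=
  sum_image (h.injOn c)

theorem sum_coordSet_add_sum_coordSet (h : IsFrobeniusCoordsOf m s) :
    ∑ x ∈ s.coordSet true, x + ∑ x ∈ s.coordSet false, x + s.durfee = m := by
  rw [h.sum_coordSet true fun x => x, h.sum_coordSet false fun x => x, ← h.sum_hook]
  simp [sum_add_distrib]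

theorem card_coordSet_filter_lt (h : IsFrobeniusCoordsOf m s) (c : Bool) {i : ℕ}
    (hi : i < s.durfee) : #{x ∈ s.coordSet c | s.coord c i < x} = i := by
  have himage : {x ∈ s.coordSet c | s.coord c i < x} = (range i).image (s.coord c) := by
    ext x
    simp only [FrobeniusCoords.mem_coordSet, mem_filter, mem_image, mem_range]
    constructor
    · rintro ⟨⟨k, hk, rfl⟩, hlt⟩
      exact ⟨k, ((h.strictAntiOn c).lt_iff_gt hi hk).1 hlt, rfl⟩
    · rintro ⟨k, hk, rfl⟩
      exact ⟨⟨k, hk.trans hi, rfl⟩, h.strictAntiOn c (hk.trans hi) hi hk⟩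
  rw [himage, card_image_of_injOn ((h.injOn c).mono _), card_range]
  exact coe_subset.2 (range_subset_range.2 hi.le)

theorem ext_coordSet {s' : FrobeniusCoords} (h : IsFrobeniusCoordsOf m s)
    (h' : IsFrobeniusCoordsOf m s') (hset : ∀ c, s.coordSet c = s'.coordSet c) : s = s' := by
  have hdurfee : s.durfee = s'.durfee := by
    rw [← h.card_coordSet true, ← h'.card_coordSet true, hset]
  refine FrobeniusCoords.ext hdurfee (funext₂ fun c i => ?_)
  by_cases hi : i < s.durfee
  · obtain ⟨k, hk, hki⟩ : ∃ k < s'.durfee, s'.coord c k = s.coord c i := by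
      rw [← FrobeniusCoords.mem_coordSet, ← hset, FrobeniusCoords.mem_coordSet]
      exact ⟨i, hi, rfl⟩
    have hik := h'.card_coordSet_filter_lt c hk
    rw [hki, ← hset, h.card_coordSet_filter_lt c hi] at hik
    rw [← hki, hik]
  · rw [h.eq_zero c i (by omega), h'.eq_zero c i (by omega)]

theorem exists_coordSet_eq {d : ℕ} (A : Bool → Finset ℤ) (hd : ∀ c, #(A c) = d)
    (hnonneg : ∀ c, ∀ x ∈ A c, 0 ≤ x)
    (hsum : ∑ x ∈ A true, x + ∑ x ∈ A false, x + d = m) :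
    ∃ s, IsFrobeniusCoordsOf m s ∧ ∀ c, s.coordSet c = A c := by
  choose f hzero hlt himage using fun c => exists_strictAnti_enumeration (A c)
  simp only [hd] at hzero hlt himage
  have hinj : ∀ c, Set.InjOn (f c) (range d) := fun c =>
    injOn_of_card_image_eq (by rw [himage, hd, card_range])
  refine ⟨⟨d, f⟩, ⟨hzero, hlt, fun c i hi => ?_, ?_⟩, himage⟩
  · refine hnonneg c _ ?_
    rw [← himage]
    exact mem_image_of_mem _ (mem_range.2 hi)
  · rw [← hsum, ← himage true, ← himage false, sum_image (hinj _), sum_image (hinj _)]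
    simp [sum_add_distrib]

end IsFrobeniusCoordsOf

namespace FrobeniusCoords

/-- The pair of the coordinate sets of `s`, that of colour `c` first. -/
def coordSetPair (c : Bool) (s : FrobeniusCoords) : Finset ℤ × Finset ℤ :=
  (s.coordSet c, s.coordSet (!c))

/-- The set of integers that are coordinates of `s` of exactly one colour; the others contribute
equally to both sides of `ExcessDominated`. -/
def unsharedCoords (s : FrobeniusCoords) : Finset ℤ :=
  symmDiff (s.coordSet true) (s.coordSet false)

theorem symmDiff_coordSet_not (s : FrobeniusCoords) (c : Bool) :
    symmDiff (s.coordSet c) (s.coordSet (!c)) = s.unsharedCoords := by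
  cases c
  exacts [symmDiff_comm _ _, rfl]

end FrobeniusCoords

open FrobeniusCoords

theorem injOn_coordSetPair (c : Bool) (n : ℕ) :
    Set.InjOn (coordSetPair c) (frobeniusCoords n) := by
  intro s hs s' hs' h
  obtain ⟨hc, hnc⟩ := Prod.ext_iff.1 h
  refine (mem_frobeniusCoords.1 hs).ext_coordSet (mem_frobeniusCoords.1 hs') fun c' => ?_
  obtain rfl | rfl := Bool.eq_or_eq_not c' c
  exacts [hc, hnc]

theorem isRecolourable_image_coordSetPair (c : Bool) (n : ℕ) :
    IsRecolourable ((frobeniusCoords n).image (coordSetPair c)) where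
  card_eq p hp := by
    obtain ⟨s, hs, rfl⟩ := mem_image.1 hp
    have h := mem_frobeniusCoords.1 hs
    exact (h.card_coordSet c).trans (h.card_coordSet (!c)).symm
  mem_of_union_of_inter p hp q hunion hinter hcard := by
    obtain ⟨s, hs, rfl⟩ := mem_image.1 hp
    have h := mem_frobeniusCoords.1 hs
    have hdurfee : #q.1 = s.durfee := by
      have hq := card_union_add_card_inter q.1 q.2
      rw [hunion, hinter, card_union_add_card_inter] at hq
      simp only [coordSetPair, h.card_coordSet] at hq
      omega
    have hsum : ∑ x ∈ q.1, x + ∑ x ∈ q.2, x + s.durfee = (n : ℤ) := by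
      rw [← sum_union_inter, hunion, hinter, sum_union_inter, ← h.sum_coordSet_add_sum_coordSet]
      cases c <;> simp [coordSetPair, add_comm]
    have hnonneg : ∀ x ∈ q.1 ∪ q.2, 0 ≤ x := by
      intro x hx
      rw [hunion, mem_union] at hx
      obtain hx | hx := hx <;> obtain ⟨i, hi, rfl⟩ := mem_coordSet.1 hx
      exacts [h.nonneg c i hi, h.nonneg (!c) i hi]
    obtain ⟨s', hs', hset⟩ := IsFrobeniusCoordsOf.exists_coordSet_eq (m := n)
      (fun c' => if c' = c then q.1 else q.2)
      (fun c' => by split_ifs; exacts [hdurfee, hcard ▸ hdurfee])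
      (fun c' x hx => hnonneg x (by rw [mem_union]; split_ifs at hx; exacts [.inl hx, .inr hx]))
      (by rw [← hsum]; cases c <;> simp [add_comm])
    refine mem_image.2 ⟨s', mem_frobeniusCoords.2 hs', ?_⟩
    simp [coordSetPair, hset]

open Classical in
theorem pow_mul_card_excessDominated_hasScales_le (c : Bool) (L n : ℕ) :
    24 ^ L * #{s ∈ frobeniusCoords n | ExcessDominated c s ∧ HasScales L s.unsharedCoords} ≤
      2 * 23 ^ L * #(frobeniusCoords n) := by
  let N : Finset ℤ → Finset ℤ → Prop := fun D S =>
    HasScales L D ∧ ∀ a, signedSum D (fun x => max (x - a) 0) S ≤ 0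
  have hN : ∀ D r, #D = 2 * r →
      24 ^ L * #{S ∈ powersetCard r D | N D S} ≤ 2 * 23 ^ L * (2 * r).choose r := by
    intro D r hr
    by_cases hD : HasScales L D
    · simpa only [N, hD, true_and] using hD.pow_mul_card_signedSum_nonpos_le hr
    · simp [N, hD]
  have hpair := (isRecolourable_image_coordSetPair c n).mul_card_filter_le hN
  rw [card_image_of_injOn (injOn_coordSetPair c n), filter_image,
    card_image_of_injOn ((injOn_coordSetPair c n).mono (filter_subset _ _))] at hpair
  refine le_trans (Nat.mul_le_mul_left _ (card_le_card fun s hs => ?_)) hpair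
  rw [mem_filter] at hs ⊢
  obtain ⟨hs, hdom, hscales⟩ := hs
  have h := mem_frobeniusCoords.1 hs
  dsimp only [coordSetPair]
  refine ⟨hs, by rwa [symmDiff_coordSet_not], fun a => ?_⟩
  rw [signedSum_symmDiff, h.sum_coordSet, h.sum_coordSet, sub_nonpos]
  exact hdom a

/-! ### Typical coordinate sets have many scales -/

namespace FrobeniusCoords

/-- The larger of the two coordinates with index `J`, used to cut the coordinate sets into
scales. -/
def threshold (s : FrobeniusCoords) (J : ℕ) : ℤ := max (s.coord true J) (s.coord false J)

theorem coord_le_threshold (s : FrobeniusCoords) (c : Bool) (J : ℕ) :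
    s.coord c J ≤ s.threshold J := by
  cases c
  exacts [le_max_right _ _, le_max_left _ _]

theorem exists_threshold_eq (s : FrobeniusCoords) (J : ℕ) : ∃ c, s.threshold J = s.coord c J := by
  obtain h | h := max_choice (s.coord true J) (s.coord false J)
  exacts [⟨true, h⟩, ⟨false, h⟩]

end FrobeniusCoords

namespace IsFrobeniusCoordsOf

variable {m : ℤ} {s : FrobeniusCoords} {i j J M : ℕ}

theorem threshold_le_threshold (h : IsFrobeniusCoordsOf m s) (hij : i ≤ j) (hj : j < s.durfee) :
    s.threshold j ≤ s.threshold i := by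
  obtain ⟨c, hc⟩ := s.exists_threshold_eq j
  have hi := s.coord_le_threshold c i
  have hle := h.add_le c hij hj
  omega

theorem le_threshold_zero (h : IsFrobeniusCoordsOf m s) {x : ℤ} (hx : x ∈ s.unsharedCoords) :
    x ≤ s.threshold 0 := by
  obtain ⟨c, hc⟩ : ∃ c, x ∈ s.coordSet c :=
    (mem_symmDiff.1 hx).elim (fun h => ⟨_, h.1⟩) fun h => ⟨_, h.1⟩
  obtain ⟨i, hi, rfl⟩ := mem_coordSet.1 hc
  exact (s.coord_le_threshold c i).trans (h.threshold_le_threshold i.zero_le hi)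

theorem lt_of_threshold_lt_coord (h : IsFrobeniusCoordsOf m s) {c : Bool} (hi : i < s.durfee)
    (hlt : s.threshold M < s.coord c i) : i < M := by
  by_contra hMi
  have hle := h.add_le c (not_lt.1 hMi) hi
  have hM := s.coord_le_threshold c M
  omega

theorem card_filter_threshold_lt_le (h : IsFrobeniusCoordsOf m s) (hJ : J < s.durfee) :
    #{x ∈ s.unsharedCoords | s.threshold J < x} ≤ 2 * J := by
  have hsub : {x ∈ s.unsharedCoords | s.threshold J < x} ⊆
      {x ∈ s.coordSet true | s.coord true J < x} ∪
        {x ∈ s.coordSet false | s.coord false J < x} := by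
    intro x hx
    simp only [unsharedCoords, mem_filter, mem_union, mem_symmDiff] at hx ⊢
    have hlt : ∀ c, s.coord c J < x := fun c => (s.coord_le_threshold c J).trans_lt hx.2
    exact hx.1.imp (fun hx => ⟨hx.1, hlt true⟩) fun hx => ⟨hx.1, hlt false⟩
  calc _ ≤ #{x ∈ s.coordSet true | s.coord true J < x} +
        #{x ∈ s.coordSet false | s.coord false J < x} :=
        (card_le_card hsub).trans (card_union_le _ _)
    _ = 2 * J := by
        rw [h.card_coordSet_filter_lt true hJ, h.card_coordSet_filter_lt false hJ, two_mul]

/- The colour attaining the threshold has exactly `J` coordinates above it. -/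
theorem le_card_filter_threshold_lt (h : IsFrobeniusCoordsOf m s) (hJM : J ≤ M)
    (hM : M < s.durfee) (hne : ∀ i < M, ∀ k < M, s.coord true i ≠ s.coord false k) :
    J ≤ #{x ∈ s.unsharedCoords | s.threshold J < x} := by
  have hne' : ∀ c, ∀ i < M, ∀ k < M, s.coord c i ≠ s.coord (!c) k := by
    intro c i hi k hk
    cases c
    exacts [(hne k hk i hi).symm, hne i hi k hk]
  obtain ⟨c, hc⟩ := s.exists_threshold_eq J
  have hsub : {x ∈ s.coordSet c | s.coord c J < x} ⊆
      {x ∈ s.unsharedCoords | s.threshold J < x} := by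
    intro x hx
    rw [mem_filter, ← hc] at hx
    rw [mem_filter, ← s.symmDiff_coordSet_not c, mem_symmDiff]
    refine ⟨Or.inl ⟨hx.1, fun hx' => ?_⟩, hx.2⟩
    have hMx : s.threshold M < x := (h.threshold_le_threshold hJM hM).trans_lt hx.2
    obtain ⟨i, hi, rfl⟩ := mem_coordSet.1 hx.1
    obtain ⟨k, hk, hki⟩ := mem_coordSet.1 hx'
    exact hne' c i (h.lt_of_threshold_lt_coord hi hMx) k
      (h.lt_of_threshold_lt_coord hk (hki.symm ▸ hMx)) hki.symm
  calc J = #{x ∈ s.coordSet c | s.coord c J < x} :=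
        (h.card_coordSet_filter_lt c (hJM.trans_lt hM)).symm
    _ ≤ _ := card_le_card hsub

/- Of the `32 * J ^ 2 + 2 * J + 1` elements exceeding the threshold with this index, at most `2 * J`
exceed the threshold with index `J`, and more than `8 * (2 * J) ^ 2` others remain. -/
theorem sq_card_filter_threshold_lt (h : IsFrobeniusCoordsOf m s) {j J' : ℕ}
    (hj : j = 32 * J ^ 2 + 2 * J + 1) (hjM : j ≤ M) (hM : M < s.durfee) (hjJ' : j ≤ J')
    (hJ' : J' < s.durfee) (hne : ∀ i < M, ∀ k < M, s.coord true i ≠ s.coord false k)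
    (hdouble : ∀ c c', 2 * (s.coord c' 0 - s.coord c' j) ≤ s.coord c 0 - s.coord c J') :
    8 * #{x ∈ s.unsharedCoords | s.threshold J < x} ^ 2 <
      #{x ∈ s.unsharedCoords | s.threshold J' < x ∧ x ≤ s.threshold J ∧
        2 * (s.threshold 0 - x) ≤ s.threshold 0 - s.threshold J'} := by
  have hold := h.card_filter_threshold_lt_le (J := J) (by omega)
  have hspan : 2 * (s.threshold 0 - s.threshold j) ≤ s.threshold 0 - s.threshold J' := by
    obtain ⟨c', hc'⟩ := s.exists_threshold_eq 0
    obtain ⟨c, hc⟩ := s.exists_threshold_eq J'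
    have hcc' := hdouble c c'
    have hcj := s.coord_le_threshold c' j
    have hc0 := s.coord_le_threshold c 0
    omega
  have hsub : {x ∈ s.unsharedCoords | s.threshold j < x} ⊆
      {x ∈ s.unsharedCoords | s.threshold J' < x ∧ x ≤ s.threshold J ∧
        2 * (s.threshold 0 - x) ≤ s.threshold 0 - s.threshold J'} ∪
      {x ∈ s.unsharedCoords | s.threshold J < x} := by
    have hmono := h.threshold_le_threshold hjJ' hJ'
    intro x hx
    rw [mem_filter] at hx
    rw [mem_union, mem_filter, mem_filter]
    rcases lt_or_ge (s.threshold J) x with hxJ | hxJ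
    · exact Or.inr ⟨hx.1, hxJ⟩
    · exact Or.inl ⟨hx.1, by omega, hxJ, by omega⟩
  have hnew := (h.le_card_filter_threshold_lt hjM hM hne).trans
    ((card_le_card hsub).trans (card_union_le _ _))
  nlinarith

theorem hasScales (h : IsFrobeniusCoordsOf m s) {L : ℕ} {J : ℕ → ℕ}
    (hJ : ∀ l, 32 * J l ^ 2 + 2 * J l + 1 < J (l + 1)) (hJM : 4 * J L ≤ M) (hM : M < s.durfee)
    (hne : ∀ i < M, ∀ k < M, s.coord true i ≠ s.coord false k)
    (hdouble : ∀ l < L, ∀ c c', 2 * (s.coord c' 0 - s.coord c' (32 * J l ^ 2 + 2 * J l + 1)) ≤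
      s.coord c 0 - s.coord c (J (l + 1))) :
    HasScales L s.unsharedCoords := by
  have hsucc : ∀ l, J l ≤ J (l + 1) := fun l => by linarith [hJ l, Nat.zero_le (J l ^ 2)]
  have hJL : ∀ l ≤ L, J l ≤ M := fun l hl =>
    (monotone_nat_of_le_succ hsucc hl).trans (by omega)
  refine ⟨s.threshold 0, fun l => s.threshold (J l), fun x => h.le_threshold_zero,
    fun l hl => ?_, fun l hl => ?_, ?_⟩
  · exact h.threshold_le_threshold (hsucc l) ((hJL (l + 1) hl).trans_lt hM)
  · have hl' := hJL (l + 1) hl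
    exact h.sq_card_filter_threshold_lt rfl ((hJ l).le.trans hl') hM (hJ l).le (hl'.trans_lt hM)
      hne (hdouble l hl)
  · calc 2 * #{x ∈ s.unsharedCoords | s.threshold (J L) < x}
        ≤ 2 * (2 * J L) :=
          Nat.mul_le_mul_left _ (h.card_filter_threshold_lt_le ((hJL L le_rfl).trans_lt hM))
      _ ≤ M := by omega
      _ ≤ #{x ∈ s.unsharedCoords | s.threshold M < x} :=
          h.le_card_filter_threshold_lt le_rfl hM hne
      _ ≤ #s.unsharedCoords := card_filter_le _ _

end IsFrobeniusCoordsOf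

theorem asympFreqLE_not_hasScales (L : ℕ) {η : ℝ} (hη : 0 < η) :
    AsympFreqLE frobeniusCoords (fun s => ¬ HasScales L s.unsharedCoords) η := by
  -- There are `4 * L` doublings to be ensured, one for each scale and pair of colours.
  have hη' : 0 < η / (4 * L + 1) := by positivity
  choose next hlt hnext using fun J : ℕ =>
    exists_asympFreqLE_coord_sub_lt (j := 32 * J ^ 2 + 2 * J + 1) (Nat.succ_pos _) hη'
  let J : ℕ → ℕ := fun l => next^[l] 1
  have hJsucc : ∀ l, J (l + 1) = next (J l) := fun l => Function.iterate_succ_apply' next l 1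
  set M := 4 * J L
  have hshared := AsympFreqLE.exists_mem (range M ×ˢ range M)
    fun z _ => asympFreqLE_coord_true_eq_coord_false z.1 z.2
  rw [sum_const_zero] at hshared
  have hspan := AsympFreqLE.exists_mem (range L ×ˢ (univ : Finset (Bool × Bool)))
    fun z _ => hnext (J z.1) z.2.1 z.2.2
  refine .of_not_and (asympFreqLE_durfee_le M) (.of_not_and hshared
    ((hspan.mono fun n s hs hbad => ?_).mono_right ?_))
  · by_contra hdouble
    obtain ⟨hne, hM, hscales⟩ := hbad
    simp only [mem_product, mem_range, mem_univ, and_true, not_exists, not_and, not_lt,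
      Prod.forall, not_le] at hne hM hdouble
    refine hscales ((mem_frobeniusCoords.1 hs).hasScales (J := J) (fun l => ?_) le_rfl hM
      (fun i hi k hk => hne i k ⟨hi, hk⟩) fun l hl c c' => ?_)
    · rw [hJsucc]
      exact hlt (J l)
    · rw [hJsucc]
      exact hdouble l c c' hl
  · simp only [sum_const, card_product, card_range, card_univ, Fintype.card_prod,
      Fintype.card_bool, nsmul_eq_mul]
    rw [mul_div_assoc', div_le_iff₀ (by positivity)]
    push_cast
    nlinarith

theorem asympFreqLE_excessDominated_hasScales (c : Bool) (L : ℕ) :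
    AsympFreqLE frobeniusCoords
      (fun s => ExcessDominated c s ∧ HasScales L s.unsharedCoords) (2 * (23 / 24) ^ L) := by
  classical
  rw [asympFreqLE_iff]
  refine fun δ hδ => Filter.Eventually.of_forall fun n => ?_
  have hcard : (24 : ℝ) ^ L *
      #{s ∈ frobeniusCoords n | ExcessDominated c s ∧ HasScales L s.unsharedCoords} ≤
        2 * 23 ^ L * #(frobeniusCoords n) := by
    exact_mod_cast pow_mul_card_excessDominated_hasScales_le c L n
  calc _ ≤ 2 * 23 ^ L * (#(frobeniusCoords n) : ℝ) / 24 ^ L := by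
        rwa [le_div_iff₀' (by positivity)]
    _ = 2 * (23 / 24) ^ L * #(frobeniusCoords n) := by rw [div_pow]; ring
    _ ≤ _ := by gcongr; linarith

theorem asympFreqLE_excessDominated (c : Bool) :
    AsympFreqLE frobeniusCoords (ExcessDominated c) 0 := by
  refine .of_forall_add fun η hη => ?_
  obtain ⟨L, hL⟩ := exists_pow_lt_of_lt_one (show (0 : ℝ) < η / 4 by positivity)
    (show (23 / 24 : ℝ) < 1 by norm_num)
  have hor := (asympFreqLE_excessDominated_hasScales c L).or
    (asympFreqLE_not_hasScales L (half_pos hη))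
  refine (hor.mono fun n s _ hs => ?_).mono_right (by linarith)
  by_cases hscales : HasScales L s.unsharedCoords
  exacts [Or.inl ⟨hs, hscales⟩, Or.inr hscales]

/-! ### Comparability to self-conjugate partitions -/

theorem asympFreqLE_comparable_conjugate :
    AsympFreqLE partitions
      (fun f => DominatedBy f (conjugate f) ∨ DominatedBy (conjugate f) f) 0 := by
  refine AsympFreqLE.mono_right (((asympFreqLE_excessDominated true).or
    (asympFreqLE_excessDominated false)).of_injOn ofPartition card_frobeniusCoords
      (fun n f hf hcomp => ?_) injOn_ofPartition) (add_zero 0).le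
  have hf := mem_partitions.1 hf
  exact ⟨mem_frobeniusCoords.2 (isFrobeniusCoordsOf_ofPartition hf),
    hcomp.imp (excessDominated_ofPartition hf (c := true))
      (excessDominated_ofPartition hf (c := false))⟩

theorem ncard_setOf_isPartitionOf (n : ℕ) :
    {μ : ℕ → ℕ | IsPartitionOf n μ}.ncard = #(partitions n) :=
  Set.ncard_eq_toFinset_card _ (finite_setOf_isPartitionOf n)

theorem exists_ncard_comparable_le {ε : ℝ} (hε : 0 < ε) :
    ∃ N : ℕ, ∀ n : ℕ, N ≤ n → ∀ l : ℕ → ℕ, IsPartitionOf n l → conjugate l = l →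
      (Set.ncard {μ : ℕ → ℕ | IsPartitionOf n μ ∧ (DominatedBy μ l ∨ DominatedBy l μ)} : ℝ) ≤
        ε * (Set.ncard {μ : ℕ → ℕ | IsPartitionOf n μ} : ℝ) := by
  classical
  obtain ⟨N, hN⟩ := Filter.eventually_atTop.1
    (asympFreqLE_iff.1 asympFreqLE_comparable_conjugate ε hε)
  refine ⟨N, fun n hn l hl hconj => ?_⟩
  have hsub : {μ : ℕ → ℕ | IsPartitionOf n μ ∧ (DominatedBy μ l ∨ DominatedBy l μ)} ⊆
      ({f ∈ partitions n | DominatedBy f (conjugate f) ∨ DominatedBy (conjugate f) f} :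
        Finset (ℕ → ℕ)) := by
    rintro μ ⟨hμ, hcomp⟩
    exact mem_coe.2 (mem_filter.2 ⟨mem_partitions.2 hμ,
      dominatedBy_conjugate_or_of_comparable hl hconj hμ hcomp⟩)
  have hcard := Set.ncard_le_ncard hsub (finite_toSet _)
  rw [Set.ncard_coe_finset] at hcard
  rw [ncard_setOf_isPartitionOf]
  exact (Nat.cast_le.2 hcard).trans ((hN n hn).trans_eq (by rw [zero_add]))

theorem isPartitionOf_staircase (m : ℕ) : IsPartitionOf (m * (m + 1) / 2) (staircase m) := by
  refine isPartitionOf_of_sum (N := m) (fun i j hij => Nat.sub_le_sub_left hij m)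
    (fun i hi => Nat.sub_eq_zero_of_le hi) ?_
  calc ∑ i ∈ range m, (m - i) = ∑ i ∈ range m, (i + 1) := by
        rw [← sum_range_reflect]
        exact sum_congr rfl fun i hi => by have := mem_range.1 hi; omega
    _ = ∑ i ∈ range (m + 1), i := (sum_range_succ' (fun i => i) m).symm
    _ = m * (m + 1) / 2 := by rw [sum_range_id, Nat.add_sub_cancel, mul_comm]

theorem conjugate_staircase (m : ℕ) : conjugate (staircase m) = staircase m := by
  apply conjugate_eq_of_lt_iff
  intro i j
  unfold staircase
  omega

theorem le_mul_succ_div_two (m : ℕ) : m ≤ m * (m + 1) / 2 := by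
  rw [Nat.le_div_iff_mul_le two_pos]
  obtain rfl | hm := Nat.eq_zero_or_pos m
  · rfl
  · exact Nat.mul_le_mul_left m (Nat.succ_le_succ hm)

/-- the proportion of partitions of `n` comparable to a self-conjugate
partition of `n` tends to zero; in particular `|C(ρ_m)| / p(m(m+1)/2) → 0`. -/
theorem stmt4 :
    (∀ ε : ℝ, 0 < ε → ∃ N : ℕ, ∀ n : ℕ, N ≤ n → ∀ l : ℕ → ℕ,
      IsPartitionOf n l → conjugate l = l →
      (Set.ncard {μ : ℕ → ℕ | IsPartitionOf n μ ∧
          (DominatedBy μ l ∨ DominatedBy l μ)} : ℝ) ≤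
        ε * (Set.ncard {μ : ℕ → ℕ | IsPartitionOf n μ} : ℝ)) ∧
    Filter.Tendsto (fun m : ℕ =>
      (Set.ncard {μ : ℕ → ℕ | IsPartitionOf (m * (m + 1) / 2) μ ∧
        (DominatedBy μ (staircase m) ∨ DominatedBy (staircase m) μ)} : ℝ) /
      (Set.ncard {μ : ℕ → ℕ | IsPartitionOf (m * (m + 1) / 2) μ} : ℝ))
      Filter.atTop (nhds 0) := by
  refine ⟨fun ε hε => exists_ncard_comparable_le hε, Metric.tendsto_atTop.2 fun ε hε => ?_⟩
  obtain ⟨N, hN⟩ := exists_ncard_comparable_le (half_pos hε)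
  refine ⟨N, fun m hm => ?_⟩
  have hpos : (0 : ℝ) < Set.ncard {μ : ℕ → ℕ | IsPartitionOf (m * (m + 1) / 2) μ} := by
    rw [ncard_setOf_isPartitionOf]
    exact Nat.cast_pos.2 (card_partitions_pos _)
  rw [Real.dist_0_eq_abs, abs_of_nonneg (by positivity), div_lt_iff₀ hpos]
  calc _ ≤ ε / 2 * _ := hN _ (hm.trans (le_mul_succ_div_two m)) _ (isPartitionOf_staircase m)
        (conjugate_staircase m)
    _ < ε * _ := mul_lt_mul_of_pos_right (half_lt_self hε) hpos
end

section
/- Let m be an odd positive integer and let k be an even integer with 0 ≤ k ≤ m. Then there exists a self-conjugate partition λ of m(m+1)/2 + k such that ρ_m ⊆ λ ⊆ ρ_{m+1}, where ⊆ denotes containment of Young diagrams. -/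
theorem isPartitionOf_of_antitone {f : ℕ → ℕ} {n N : ℕ} (hf : Antitone f)
    (hN : ∀ i, N ≤ i → f i = 0) (hsum : ∑ i ∈ Finset.range N, f i = n) : IsPartitionOf n f := by
  have eq_zero_of_le (i : ℕ) (hi : n ≤ i) : f i = 0 := by
    by_contra hne
    have hiN : i < N := not_le.mp fun h => hne (hN i h)
    refine hi.not_gt ?_
    calc
      i + 1 = ∑ _j ∈ Finset.range (i + 1), 1 := by simp
      _ ≤ ∑ j ∈ Finset.range (i + 1), f j := Finset.sum_le_sum fun j hj =>
          (Nat.one_le_iff_ne_zero.mpr hne).trans (hf (Finset.mem_range_succ_iff.mp hj))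
      _ ≤ ∑ j ∈ Finset.range N, f j :=
          Finset.sum_le_sum_of_subset (Finset.range_subset_range.mpr hiN)
      _ = n := hsum
  refine ⟨fun i j hij => hf hij, eq_zero_of_le, ?_⟩
  calc
    ∑ i ∈ Finset.range n, f i = ∑ i ∈ Finset.range (max n N), f i :=
      (Finset.eventually_constant_sum eq_zero_of_le (le_max_left n N)).symm
    _ = ∑ i ∈ Finset.range N, f i := Finset.eventually_constant_sum hN (le_max_right n N)
    _ = n := hsum

theorem conjugate_eq_of_forall_lt_iff_lt {f g : ℕ → ℕ} (h : ∀ i j, i < f j ↔ j < g i) :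
    conjugate f = g := by
  funext i
  have hset : {j | i < f j} = Set.Iio (g i) := Set.ext fun j => h i j
  rw [conjugate, hset, ← Finset.coe_Iio, Set.ncard_coe_finset, Nat.card_Iio]

theorem sum_range_succ_staircase (m : ℕ) :
    ∑ i ∈ Finset.range (m + 1), staircase m i = m * (m + 1) / 2 := calc
  ∑ i ∈ Finset.range (m + 1), staircase m i = ∑ i ∈ Finset.range (m + 1), i :=
    Finset.sum_range_reflect (fun i => i) (m + 1)
  _ = m * (m + 1) / 2 := by rw [Finset.sum_range_id, Nat.add_sub_cancel, mul_comm]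

/-- The diagram obtained from the staircase `ρ_m` by adding one cell to each row in `S`. Rows are
0-indexed, so the cells that can be added are those in rows `0, …, m`. -/
def augmentedStaircase (m : ℕ) (S : Finset ℕ) : ℕ → ℕ := fun i =>
  staircase m i + if i ∈ S then 1 else 0

section augmentedStaircase

variable {m : ℕ} {S : Finset ℕ}

theorem staircase_le_augmentedStaircase (i : ℕ) : staircase m i ≤ augmentedStaircase m S i :=
  Nat.le_add_right _ _

theorem lt_augmentedStaircase_iff (hS : S ⊆ Finset.range (m + 1)) {i j : ℕ} :
    j < augmentedStaircase m S i ↔ i + j < m ∨ i + j = m ∧ i ∈ S := by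
  have hi : i ∈ S → i ≤ m := fun h => Finset.mem_range_succ_iff.mp (hS h)
  unfold augmentedStaircase staircase
  split_ifs with hiS
  · have := hi hiS
    simp only [hiS, and_true]
    omega
  · simp only [hiS, and_false, or_false]
    omega

theorem augmentedStaircase_le_staircase_succ (hS : S ⊆ Finset.range (m + 1)) (i : ℕ) :
    augmentedStaircase m S i ≤ staircase (m + 1) i := by
  refine le_of_forall_lt fun j hj => ?_
  rw [lt_augmentedStaircase_iff hS] at hj
  unfold staircase
  omega

theorem antitone_augmentedStaircase (hS : S ⊆ Finset.range (m + 1)) :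
    Antitone (augmentedStaircase m S) := by
  refine antitone_nat_of_succ_le fun i => ?_
  calc
    augmentedStaircase m S (i + 1) ≤ staircase (m + 1) (i + 1) :=
      augmentedStaircase_le_staircase_succ hS _
    _ = staircase m i := Nat.add_sub_add_right m 1 i
    _ ≤ augmentedStaircase m S i := staircase_le_augmentedStaircase i

theorem sum_range_succ_augmentedStaircase (hS : S ⊆ Finset.range (m + 1)) :
    ∑ i ∈ Finset.range (m + 1), augmentedStaircase m S i = m * (m + 1) / 2 + S.card := by
  simp only [augmentedStaircase, Finset.sum_add_distrib, sum_range_succ_staircase,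
    Finset.sum_ite_mem, Finset.inter_eq_right.mpr hS, Finset.sum_const, smul_eq_mul, mul_one]

theorem isPartitionOf_augmentedStaircase (hS : S ⊆ Finset.range (m + 1)) :
    IsPartitionOf (m * (m + 1) / 2 + S.card) (augmentedStaircase m S) := by
  refine isPartitionOf_of_antitone (antitone_augmentedStaircase hS) (fun i hi => ?_)
    (sum_range_succ_augmentedStaircase hS)
  exact Nat.eq_zero_of_le_zero
    ((augmentedStaircase_le_staircase_succ hS i).trans_eq (Nat.sub_eq_zero_of_le hi))

theorem conjugate_augmentedStaircase (hS : S ⊆ Finset.range (m + 1))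
    (hsymm : ∀ i ∈ S, m - i ∈ S) :
    conjugate (augmentedStaircase m S) = augmentedStaircase m S := by
  have mem_of_add_eq {i j : ℕ} (hij : i + j = m) (hi : i ∈ S) : j ∈ S := by
    simpa [← hij] using hsymm i hi
  refine conjugate_eq_of_forall_lt_iff_lt fun i j => ?_
  rw [lt_augmentedStaircase_iff hS, lt_augmentedStaircase_iff hS, add_comm j i]
  exact or_congr_right (and_congr_right fun hij =>
    ⟨mem_of_add_eq (by omega), mem_of_add_eq hij⟩)

end augmentedStaircase

theorem exists_reflection_invariant_finset_card_eq {m k : ℕ} (hk : k ≤ m + 1)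
    (hmk : Even m ∨ Even k) :
    ∃ S ⊆ Finset.range (m + 1), (∀ i ∈ S, m - i ∈ S) ∧ S.card = k := by
  have Icc_subset (t : ℕ) : Finset.Icc t (m - t) ⊆ Finset.range (m + 1) := fun i hi => by
    rw [Finset.mem_Icc] at hi
    exact Finset.mem_range.mpr (by omega)
  rcases Nat.even_or_odd k with ⟨t, rfl⟩ | hk_odd
  · refine ⟨Finset.range (m + 1) \ Finset.Icc t (m - t), Finset.sdiff_subset, fun i hi => ?_, ?_⟩
    · simp only [Finset.mem_sdiff, Finset.mem_range, Finset.mem_Icc] at hi ⊢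
      omega
    · rw [Finset.card_sdiff_of_subset (Icc_subset t), Finset.card_range, Nat.card_Icc]
      omega
  · have hm : Even m := hmk.resolve_right (Nat.not_even_iff_odd.mpr hk_odd)
    obtain ⟨s, hs⟩ : Even (m + 1 - k) := Nat.Odd.sub_odd hm.add_one hk_odd
    have hk_pos : 0 < k := hk_odd.pos
    refine ⟨Finset.Icc s (m - s), Icc_subset s, fun i hi => ?_, ?_⟩
    · rw [Finset.mem_Icc] at hi ⊢
      omega
    · rw [Nat.card_Icc]
      omega

theorem stmt17_general (m k : ℕ) (hmk : Even m ∨ Even k) (hk : k ≤ m + 1) :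
    ∃ l : ℕ → ℕ, IsPartitionOf (m * (m + 1) / 2 + k) l ∧ conjugate l = l ∧
      (∀ i, staircase m i ≤ l i) ∧ (∀ i, l i ≤ staircase (m + 1) i) := by
  obtain ⟨S, hS, hsymm, rfl⟩ := exists_reflection_invariant_finset_card_eq hk hmk
  exact ⟨augmentedStaircase m S, isPartitionOf_augmentedStaircase hS,
    conjugate_augmentedStaircase hS hsymm, staircase_le_augmentedStaircase,
    augmentedStaircase_le_staircase_succ hS⟩

/-- for odd `m > 0` and even `0 ≤ k ≤ m` there is a self-conjugate
partition `λ` of `m(m+1)/2 + k` with `ρ_m ⊆ λ ⊆ ρ_{m+1}` (Young-diagram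
containment). -/
theorem stmt17 (m k : ℕ) (hm : 0 < m) (hmo : Odd m) (hke : Even k) (hk : k ≤ m) :
    ∃ l : ℕ → ℕ, IsPartitionOf (m * (m + 1) / 2 + k) l ∧ conjugate l = l ∧
      (∀ i, staircase m i ≤ l i) ∧ (∀ i, l i ≤ staircase (m + 1) i) :=
  stmt17_general m k (Or.inr hke) (hk.trans m.le_succ)
end
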